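/- arXiv:2008.06554 — 2 statements merged into one kernel-verified Lean document; each statement's English description precedes it below -/
import Mathlib

section
/- There is an absolute constant K such that the following holds in the Line setting. Assume u > (p+2)·log₂ v + log₂ q and let h := s/(u − (p+2)·log₂ v − log₂ q) + 1. For every deterministic MPC algorithm with m machines, local memory s bits, and at most q oracle queries per machine per round, every machine i, and every round k ≥ 0, the probability over uniformly random (RO, X) that |B_i^{(k)}| > h and the event E^{(k)} does not occur is at most K·w·2^(−(u − (p+2)·log₂ v − log₂ q)). (The paper, Lemma 3.5, states this bound as 2^(−(u − (log²w + 2)·log v − log q)); the factor K·w accounts for bookkeeping such as recording the index j_k.) -/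
/-- Probability of `P` under the uniform distribution on a finite type `Ω`. -/
noncomputable def unifProb {Ω : Type} [Fintype Ω] (P : Ω → Prop) : ℝ :=
  (Set.ncard {ω : Ω | P ω} : ℝ) / (Fintype.card Ω : ℝ)
/-- Bit strings of length `k`. -/
abbrev Bits (k : ℕ) := Fin k → Bool

/-- The `j`-th bit (`0`-based) of a bit string, `false` out of range. -/
def bitAt {k : ℕ} (y : Bits k) (j : ℕ) : Bool := if h : j < k then y ⟨j, h⟩ else false

/-- The `i`-th block (`0`-based) of the input `X = (x_1, …, x_v)`. -/
def getX {u v : ℕ} (X : Fin v → Bits u) (i : ℕ) : Bits u :=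
  if h : i < v then X ⟨i, h⟩ else fun _ => false
/-- The integer encoded by the first `κ` bits of a bit string. -/
def natOf {n : ℕ} (y : Bits n) (κ : ℕ) : ℕ :=
  ∑ j ∈ Finset.range κ, if bitAt y j then 2 ^ j else 0

/-- `⟨i, x, ρ⟩` : the `n`-bit concatenation of the `W`-bit binary encoding of `i`, the
`u`-bit strings `x` and `ρ`, and trailing zeros. -/
def lineStr (n W u : ℕ) (i : ℕ) (x ρ : Bits u) : Bits n := fun j =>
  if (j : ℕ) < W then Nat.testBit i (j : ℕ)
  else if (j : ℕ) < W + u then bitAt x ((j : ℕ) - W)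
  else if (j : ℕ) < W + 2 * u then bitAt ρ ((j : ℕ) - W - u)
  else false

/-- `lineChain n u v W κ RO X k = (ℓ_{k+1} − 1, r_{k+1})` : the Line chain, with the
pointer stored `0`-based.  `ℓ_1 = 1, r_1 = 0^u`; `e_i = ⟨i, x_{ℓ_i}, r_i⟩`;
`ℓ_{i+1} − 1` is the integer encoded by the first `κ` bits of `RO(e_i)` (reduced mod
`v`, which is the identity when `v = 2^κ`), and `r_{i+1}` is the `u` bits of `RO(e_i)`
in positions `κ+1, …, κ+u`. -/
def lineChain (n u v W κ : ℕ) (RO : Bits n → Bits n) (X : Fin v → Bits u) :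
    ℕ → ℕ × Bits u
  | 0 => (0, fun _ => false)
  | k + 1 =>
    let c := lineChain n u v W κ RO X k
    let e := lineStr n W u (k + 1) (getX X (c.1 % v)) c.2
    (natOf (RO e) κ % v, fun j => bitAt (RO e) (κ + (j : ℕ)))

/-- `lineE n u v W κ RO X k` is the paper's `e_{k+1}`. -/
def lineE (n u v W κ : ℕ) (RO : Bits n → Bits n) (X : Fin v → Bits u) (k : ℕ) : Bits n :=
  lineStr n W u (k + 1) (getX X ((lineChain n u v W κ RO X k).1 % v))
    (lineChain n u v W κ RO X k).2

/-- `branchE n u v W κ RO X j a c` is the branch entry `e'_c` determined by the paper's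
(1-based) index `j` and the (0-based) sequence `a` (only `a 1, …, a c` matter):
`e'_0 = ⟨j+1, x_{ℓ_{j+1}}, r_{j+1}⟩ = e_{j+1}`, and for `c ≥ 1`,
`e'_c = ⟨j+c+1, x_{a_c}, ρ_c⟩` where `ρ_c` is the `u` bits of `RO(e'_{c−1})` in
positions `κ+1, …, κ+u`. -/
def branchE (n u v W κ : ℕ) (RO : Bits n → Bits n) (X : Fin v → Bits u) (j : ℕ)
    (a : ℕ → Fin v) : ℕ → Bits n
  | 0 => lineE n u v W κ RO X j
  | c + 1 => lineStr n W u (j + c + 2) (X (a (c + 1)))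
      (fun t => bitAt (RO (branchE n u v W κ RO X j a c)) (κ + (t : ℕ)))
/-- Answers to the first `t` queries of a deterministic adaptive oracle algorithm whose
next-query function is `f`. -/
def advAns (n : ℕ) (RO : Bits n → Bits n) (f : List (Bits n) → Bits n) : ℕ → List (Bits n)
  | 0 => []
  | t + 1 => advAns n RO f t ++ [RO (f (advAns n RO f t))]

/-- The `(t+1)`-st query (so the paper's `q_{t+1}`) of the adaptive algorithm `f`. -/
def advQ (n : ℕ) (RO : Bits n → Bits n) (f : List (Bits n) → Bits n) (t : ℕ) : Bits n :=
  f (advAns n RO f t)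
/-- A deterministic MPC algorithm with `m` machines, local memory `s` bits, at most `q`
adaptive oracle queries (to an oracle on `n`-bit strings) per machine per round, on
inputs from `I`.  `init` splits the input into the machines' initial states, `qf k i` is
machine `i`'s next-query function in round `k` (from its state and the answers received
so far in the round), and `cf k i` produces the messages machine `i` sends to each
machine at the end of round `k`; each machine receives at most `s` bits per round. -/
structure MPC (n s q m : ℕ) (I : Type) where
  init : I → Fin m → Bits s
  qf : ℕ → Fin m → Bits s → List (Bits n) → Bits n
  cf : ℕ → Fin m → Bits s → List (Bits n) → Fin m → List Bool
  comm_le : ∀ (k : ℕ) (st : Fin m → Bits s) (ans : Fin m → List (Bits n)) (j : Fin m),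
    (∑ i : Fin m, (cf k i (st i) (ans i) j).length) ≤ s

/-- Pad/truncate a list of booleans to an `s`-bit state. -/
def listToBits (s : ℕ) (L : List Bool) : Bits s := fun b => L.getD (b : ℕ) false

/-- `mstate A RO X k i` : the state of machine `i` at the beginning of round `k` when the
MPC algorithm `A` is run with oracle `RO` on input `X`. -/
def mstate {n s q m : ℕ} {I : Type} (A : MPC n s q m I) (RO : Bits n → Bits n) (X : I) :
    ℕ → Fin m → Bits s
  | 0 => A.init X
  | k + 1 => fun j =>
      listToBits s ((List.ofFn (fun i : Fin m =>
        A.cf k i (mstate A RO X k i)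
          (advAns n RO (A.qf k i (mstate A RO X k i)) q) j)).flatten)

/-- The `(t+1)`-st oracle query of machine `i` in round `k` of the run of `A` with
oracle `RO` on input `X`. -/
def mquery {n s q m : ℕ} {I : Type} (A : MPC n s q m I) (RO : Bits n → Bits n) (X : I)
    (k : ℕ) (i : Fin m) (t : ℕ) : Bits n :=
  advQ n RO (A.qf k i (mstate A RO X k i)) t
/-- `jkIdx … k` is the paper's `j_k`: the largest `j ∈ {1,…,w}` such that `e_j` was
queried by some machine before the beginning of round `k` (in rounds `< k`), and `1` if
no such `j` exists. -/
noncomputable def jkIdx (n u v W κ w s q m : ℕ) (A : MPC n s q m (Fin v → Bits u))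
    (RO : Bits n → Bits n) (X : Fin v → Bits u) (k : ℕ) : ℕ :=
  max (sSup {j : ℕ | 1 ≤ j ∧ j ≤ w ∧ ∃ k' < k, ∃ i : Fin m, ∃ t < q,
    mquery A RO X k' i t = lineE n u v W κ RO X (j - 1)}) 1

open Classical in
/-- The modified oracle `RO^{(k)}_{a_1,…,a_p}` (with `j0 = j_k − 1`, so that
`branchE … j0 a t` is the paper's `f_t`): it agrees with `RO` everywhere except that,
for `t < p`, its value at `f_t` is `RO(f_t)` with the first `κ` bits replaced by the
`κ`-bit encoding of the (0-based) pointer `a_{t+1}`. -/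
noncomputable def modRO (n u v W κ p : ℕ) (RO : Bits n → Bits n) (X : Fin v → Bits u)
    (j0 : ℕ) (a : ℕ → Fin v) : Bits n → Bits n := fun y =>
  if h : ∃ t, t < p ∧ branchE n u v W κ RO X j0 a t = y then
    fun b : Fin n =>
      if (b : ℕ) < κ then Nat.testBit ((a (Nat.find h + 1) : ℕ)) (b : ℕ) else RO y b
  else RO y

/-- The set `B_i^{(k)}` : all (0-based) indices `a₀ ∈ {1,…,v}` such that for some
sequence `g = (a_1,…,a_p)` and some `b ∈ {1,…,p}` with `a_b = a₀`, machine `i`, started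
in round `k` from its true-run state `M_i^{(k)}` but with its round-`k` queries answered
by the modified oracle `RO^{(k)}_{a_1,…,a_p}`, makes the query `f_b`. -/
noncomputable def Bset (n u v W κ p w s q m : ℕ) (A : MPC n s q m (Fin v → Bits u))
    (RO : Bits n → Bits n) (X : Fin v → Bits u) (k : ℕ) (i : Fin m) : Set (Fin v) :=
  {a0 | ∃ g : ℕ → Fin v, ∃ b, 1 ≤ b ∧ b ≤ p ∧ g b = a0 ∧ ∃ t < q,
    advQ n (modRO n u v W κ p RO X (jkIdx n u v W κ w s q m A RO X k - 1) g)
        (A.qf k i (mstate A RO X k i)) t =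
      branchE n u v W κ RO X (jkIdx n u v W κ w s q m A RO X k - 1) g b}

/-! ### Auxiliary material -/

/-- The `x`-field of a query. -/
def xpart {n : ℕ} (W u : ℕ) (y : Bits n) : Bits u := fun j => bitAt y (W + (j : ℕ))

/-- The query with the `x`-field erased. -/
def maskx {n : ℕ} (W u : ℕ) (y : Bits n) : Bits n := fun j =>
  if W ≤ (j : ℕ) ∧ (j : ℕ) < W + u then false else y j

/-- Symbolic queries: either an index `a` with a masked query, or a plain query. -/
abbrev SymQ (n v : ℕ) := (Fin v × Bits n) ⊕ Bits n

open Classical in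
/-- The symbolic form of a query, recognising only the blocks with index in `S`. -/
noncomputable def phiS {n u v : ℕ} (W : ℕ) (S : Finset (Fin v)) (X : Fin v → Bits u)
    (y : Bits n) : SymQ n v :=
  if h : ∃ a, a ∈ S ∧ X a = xpart W u y then Sum.inl (h.choose, maskx W u y) else Sum.inr y

lemma eq_of_mask {n W u : ℕ} {y y' : Bits n} (h1 : xpart W u y = xpart W u y')
    (h2 : maskx W u y = maskx W u y') : y = y' := by
  funext j
  by_cases hj : W ≤ (j : ℕ) ∧ (j : ℕ) < W + u
  · have := congrFun h1 ⟨(j : ℕ) - W, by omega⟩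
    have e : W + ((j : ℕ) - W) = j := by omega
    simpa [xpart, bitAt, e] using this
  · have := congrFun h2 j
    simpa [maskx, hj] using this

lemma phiS_injective {n u v : ℕ} (W : ℕ) (S : Finset (Fin v)) (X : Fin v → Bits u) :
    Function.Injective (phiS (n := n) W S X) := by
  intro y y' h
  unfold phiS at h
  split_ifs at h with h1 h2 h2
  · have h' := Sum.inl.inj h
    have ha := congrArg Prod.fst h'
    have hb := congrArg Prod.snd h'
    simp only at ha hb
    refine eq_of_mask ?_ hb
    rw [← h1.choose_spec.2, ← h2.choose_spec.2, ha]
  · exact Sum.inr.inj h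

lemma phiS_eq_inl {n u v : ℕ} {W : ℕ} {S : Finset (Fin v)} {X : Fin v → Bits u}
    (hX : Set.InjOn X S) {y : Bits n} {a : Fin v} (ha : a ∈ S) (h : X a = xpart W u y) :
    phiS W S X y = Sum.inl (a, maskx W u y) := by
  have h1 : ∃ a, a ∈ S ∧ X a = xpart W u y := ⟨a, ha, h⟩
  unfold phiS
  rw [dif_pos h1]
  have : h1.choose = a := hX h1.choose_spec.1 ha (h1.choose_spec.2.trans h.symm)
  rw [this]

lemma phiS_eq_inr {n u v : ℕ} {W : ℕ} {S : Finset (Fin v)} {X : Fin v → Bits u}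
    {y : Bits n} (h : ∀ a ∈ S, X a ≠ xpart W u y) :
    phiS W S X y = Sum.inr y := by
  unfold phiS
  rw [dif_neg]
  rintro ⟨a, ha, h'⟩
  exact h a ha h'

lemma phiS_restrict {n u v : ℕ} {W : ℕ} {S : Finset (Fin v)} {X Y : Fin v → Bits u}
    (hX : Function.Injective X) (hXY : ∀ a ∈ S, X a = Y a) {y : Bits n}
    (h : ∀ a, a ∉ S → xpart W u y ≠ X a) :
    phiS W Finset.univ X y = phiS W S Y y := by
  by_cases h1 : ∃ a ∈ S, X a = xpart W u y
  · obtain ⟨a, ha, h2⟩ := h1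
    rw [phiS_eq_inl hX.injOn (Finset.mem_univ a) h2, phiS_eq_inl _ ha ((hXY a ha).symm.trans h2)]
    intro b hb c hc hbc
    apply hX
    rw [hXY b hb, hXY c hc, hbc]
  · push Not at h1
    rw [phiS_eq_inr, phiS_eq_inr]
    · intro a ha; rw [← hXY a ha]; exact h1 a ha
    · intro a _
      by_cases ha : a ∈ S
      · exact h1 a ha
      · exact (h a ha).symm

lemma advAns_congr {n : ℕ} {O1 O2 : Bits n → Bits n} {f : List (Bits n) → Bits n} :
    ∀ t : ℕ, (∀ t' < t, O1 (advQ n O1 f t') = O2 (advQ n O1 f t')) →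
      advAns n O1 f t = advAns n O2 f t
  | 0, _ => rfl
  | t + 1, h => by
    have ih := advAns_congr t (fun t' ht => h t' (by omega))
    have h2 := h t (by omega)
    simp only [advAns]
    unfold advQ at h2
    rw [h2, ih]

open Classical in
/-- The blocks that are hit by some simulated run. -/
noncomputable def hitSet {n u v : ℕ} (q W : ℕ) {G : Type} (f : List (Bits n) → Bits n)
    (O : G → SymQ n v → Bits n) (X : Fin v → Bits u) : Finset (Fin v) :=
  Finset.univ.filter (fun a => ∃ g : G, ∃ t < q,
    xpart W u (advQ n (O g ∘ phiS W Finset.univ X) f t) = X a)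

open Classical in
/-- Compatible inputs with at least `N` hits outside `S`. -/
noncomputable def badX {n u v : ℕ} (q W : ℕ) {G : Type} (f : List (Bits n) → Bits n)
    (O : G → SymQ n v → Bits n) (N : ℕ) (S : Finset (Fin v)) (Y : Fin v → Bits u) :
    Finset (Fin v → Bits u) :=
  Finset.univ.filter (fun X => Function.Injective X ∧ (∀ a ∈ S, X a = Y a) ∧
    N ≤ (hitSet q W f O X \ S).card)

open Classical in
lemma agree_card {u v : ℕ} (S : Finset (Fin v)) (Y : Fin v → Bits u) :
    (Finset.univ.filter (fun X : Fin v → Bits u => ∀ a ∈ S, X a = Y a)).card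
      * (2 ^ u) ^ S.card ≤ (2 ^ u) ^ v := by
  have h1 : (Finset.univ.filter (fun X : Fin v → Bits u => ∀ a ∈ S, X a = Y a))
      = Fintype.piFinset (fun a => if a ∈ S then {Y a} else Finset.univ) := by
    ext X
    simp only [Finset.mem_filter, Finset.mem_univ, true_and, Fintype.mem_piFinset]
    refine forall_congr' fun a => ?_
    by_cases ha : a ∈ S <;> simp [ha]
  have h2 : ∀ a : Fin v, (if a ∈ S then ({Y a} : Finset (Bits u)) else Finset.univ).card
      = if a ∈ S then 1 else 2 ^ u := by
    intro a; split_ifs <;> simp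
  have h3 : ((2 : ℕ) ^ u) ^ S.card = ∏ a : Fin v, if a ∈ S then 2 ^ u else 1 := by
    rw [Finset.prod_ite_mem]; simp
  rw [h1, Fintype.card_piFinset, Finset.prod_congr rfl (fun a _ => h2 a), h3,
    ← Finset.prod_mul_distrib]
  apply le_of_eq
  rw [Finset.prod_congr rfl (g := fun _ => 2 ^ u)]
  · simp
  · intro a _; split_ifs <;> simp

open Classical in
lemma count_badX {n u v : ℕ} (q W : ℕ) {G : Type} [Fintype G] (f : List (Bits n) → Bits n)
    (O : G → SymQ n v → Bits n) (N : ℕ) : ∀ (S : Finset (Fin v)) (Y : Fin v → Bits u),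
    (badX q W f O N S Y).card * ((2 ^ u) ^ N * (2 ^ u) ^ S.card) ≤
      (Fintype.card G * q * v) ^ N * (2 ^ u) ^ v := by
  induction N with
  | zero =>
    intro S Y
    have h := agree_card S Y
    have h2 : (badX q W f O 0 S Y).card ≤
        (Finset.univ.filter (fun X : Fin v → Bits u => ∀ a ∈ S, X a = Y a)).card := by
      apply Finset.card_le_card
      intro X hX
      simp only [badX, Finset.mem_filter] at hX ⊢
      exact ⟨hX.1, hX.2.2.1⟩
    simp only [pow_zero, one_mul]
    exact (Nat.mul_le_mul_right _ h2).trans h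
  | succ N ih =>
    intro S Y
    let I : Finset (G × ℕ × Fin v) := Finset.univ ×ˢ Finset.range q ×ˢ Sᶜ
    let F : G × ℕ × Fin v → Finset (Fin v → Bits u) := fun i =>
      badX q W f O N (insert i.2.2 S)
        (Function.update Y i.2.2 (xpart W u (advQ n (O i.1 ∘ phiS W S Y) f i.2.1)))
    have hsub : badX q W f O (N + 1) S Y ⊆ I.biUnion F := by
      intro X hX
      simp only [badX, Finset.mem_filter, Finset.mem_univ, true_and] at hX
      obtain ⟨hinj, hag, hN⟩ := hX
      have hne : (hitSet q W f O X \ S).Nonempty := by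
        rw [← Finset.card_pos]; omega
      obtain ⟨a0, ha0⟩ := hne
      simp only [hitSet, Finset.mem_sdiff, Finset.mem_filter, Finset.mem_univ, true_and] at ha0
      obtain ⟨⟨g, t0, ht0, hx0⟩, ha0S⟩ := ha0
      have hex : ∃ t, ∃ a, a ∉ S ∧
          xpart W u (advQ n (O g ∘ phiS W Finset.univ X) f t) = X a := ⟨t0, a0, ha0S, hx0⟩
      have hle : Nat.find hex ≤ t0 := Nat.find_min' hex ⟨a0, ha0S, hx0⟩
      obtain ⟨a, haS, hxa⟩ := Nat.find_spec hex
      have hmin := fun t' (ht' : t' < Nat.find hex) => Nat.find_min hex ht'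
      generalize Nat.find hex = t at hle hxa hmin
      have hq : advQ n (O g ∘ phiS W Finset.univ X) f t = advQ n (O g ∘ phiS W S Y) f t := by
        unfold advQ
        rw [advAns_congr t]
        intro t' ht'
        simp only [Function.comp_apply]
        rw [phiS_restrict hinj hag]
        intro b hb hxb
        exact hmin t' ht' ⟨b, hb, hxb⟩
      rw [Finset.mem_biUnion]
      refine ⟨(g, t, a), ?_, ?_⟩
      · simp only [I, Finset.mem_product, Finset.mem_univ, true_and, Finset.mem_range,
          Finset.mem_compl]
        exact ⟨by omega, haS⟩
      · simp only [F, badX, Finset.mem_filter, Finset.mem_univ, true_and]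
        refine ⟨hinj, ?_, ?_⟩
        · intro b hb
          by_cases hba : b = a
          · subst hba
            rw [Function.update_self, ← hq, hxa]
          · rw [Function.update_of_ne hba]
            exact hag b ((Finset.mem_insert.mp hb).resolve_left hba)
        · rw [Finset.sdiff_insert]
          have := Finset.pred_card_le_card_erase (s := hitSet q W f O X \ S) (a := a)
          omega
    have hI : I.card ≤ Fintype.card G * q * v := by
      simp only [I, Finset.card_product, Finset.card_univ, Finset.card_range]
      rw [mul_assoc]
      gcongr
      simpa using Finset.card_le_univ Sᶜ
    have hF : ∀ i ∈ I, (F i).card * ((2 ^ u) ^ (N + 1) * (2 ^ u) ^ S.card) ≤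
        (Fintype.card G * q * v) ^ N * (2 ^ u) ^ v := by
      intro i hi
      have hi2 : i.2.2 ∉ S := by
        simp only [I, Finset.mem_product, Finset.mem_compl] at hi
        exact hi.2.2
      have := ih (insert i.2.2 S)
        (Function.update Y i.2.2 (xpart W u (advQ n (O i.1 ∘ phiS W S Y) f i.2.1)))
      rw [Finset.card_insert_of_notMem hi2] at this
      refine le_trans (le_of_eq ?_) this
      simp only [F]
      ring
    calc (badX q W f O (N + 1) S Y).card * ((2 ^ u) ^ (N + 1) * (2 ^ u) ^ S.card)
        ≤ (∑ i ∈ I, (F i).card) * ((2 ^ u) ^ (N + 1) * (2 ^ u) ^ S.card) := by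
          gcongr
          exact (Finset.card_le_card hsub).trans Finset.card_biUnion_le
      _ = ∑ i ∈ I, (F i).card * ((2 ^ u) ^ (N + 1) * (2 ^ u) ^ S.card) := by
          rw [Finset.sum_mul]
      _ ≤ ∑ i ∈ I, (Fintype.card G * q * v) ^ N * (2 ^ u) ^ v := Finset.sum_le_sum hF
      _ = I.card * ((Fintype.card G * q * v) ^ N * (2 ^ u) ^ v) := by
          rw [Finset.sum_const, smul_eq_mul]
      _ ≤ (Fintype.card G * q * v) * ((Fintype.card G * q * v) ^ N * (2 ^ u) ^ v) := by
          gcongr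
      _ = (Fintype.card G * q * v) ^ (N + 1) * (2 ^ u) ^ v := by ring

/-! ### Symbolic chain -/

/-- Symbolic version of `lineChain`. -/
def sChain (n u v W κ : ℕ) (hv : 0 < v) (Z : SymQ n v → Bits n) : ℕ → ℕ × Bits u
  | 0 => (0, fun _ => false)
  | k + 1 =>
    let c := sChain n u v W κ hv Z k
    let z := Z (Sum.inl (⟨c.1 % v, Nat.mod_lt _ hv⟩, lineStr n W u (k + 1) (fun _ => false) c.2))
    (natOf z κ % v, fun j => bitAt z (κ + (j : ℕ)))

/-- Symbolic version of `branchE`. -/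
def sF (n u v W κ : ℕ) (hv : 0 < v) (Z : SymQ n v → Bits n) (j : ℕ) (a : ℕ → Fin v) :
    ℕ → SymQ n v
  | 0 => Sum.inl (⟨(sChain n u v W κ hv Z j).1 % v, Nat.mod_lt _ hv⟩,
      lineStr n W u (j + 1) (fun _ => false) (sChain n u v W κ hv Z j).2)
  | c + 1 => Sum.inl (a (c + 1), lineStr n W u (j + c + 2) (fun _ => false)
      (fun t => bitAt (Z (sF n u v W κ hv Z j a c)) (κ + (t : ℕ))))

open Classical in
/-- Symbolic version of `modRO`. -/
noncomputable def sMod (n u v W κ p : ℕ) (hv : 0 < v) (Z : SymQ n v → Bits n)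
    (j0 : ℕ) (a : ℕ → Fin v) : SymQ n v → Bits n := fun z =>
  if h : ∃ t, t < p ∧ sF n u v W κ hv Z j0 a t = z then
    fun b : Fin n =>
      if (b : ℕ) < κ then Nat.testBit ((a (Nat.find h + 1) : ℕ)) (b : ℕ) else Z z b
  else Z z

lemma xpart_lineStr {n W u i : ℕ} (hn : W + 2 * u ≤ n) (x ρ : Bits u) :
    xpart W u (lineStr n W u i x ρ) = x := by
  funext j
  have hj := j.2
  have h1 : W + (j : ℕ) < n := by omega
  simp [xpart, bitAt, lineStr, h1]

lemma maskx_lineStr {n W u i : ℕ} (x ρ : Bits u) :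
    maskx W u (lineStr n W u i x ρ) = lineStr n W u i (fun _ => false) ρ := by
  funext j
  unfold maskx lineStr
  by_cases h1 : (j : ℕ) < W
  · have : ¬ (W ≤ (j : ℕ) ∧ (j : ℕ) < W + u) := by omega
    simp only [this, if_false, h1, if_true]
  · by_cases h2 : (j : ℕ) < W + u
    · have : (W ≤ (j : ℕ) ∧ (j : ℕ) < W + u) := by omega
      simp [this, h1, bitAt]
    · simp [h1, h2]

lemma phi_lineStr {n W u v i : ℕ} (hn : W + 2 * u ≤ n) {X : Fin v → Bits u}
    (hX : Function.Injective X) (a : Fin v) (ρ : Bits u) :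
    phiS W Finset.univ X (lineStr n W u i (X a) ρ) =
      Sum.inl (a, lineStr n W u i (fun _ => false) ρ) := by
  rw [phiS_eq_inl hX.injOn (Finset.mem_univ a) (xpart_lineStr hn _ _).symm, maskx_lineStr]

lemma getX_mod {u v : ℕ} (hv : 0 < v) (X : Fin v → Bits u) (c : ℕ) :
    getX X (c % v) = X ⟨c % v, Nat.mod_lt _ hv⟩ := by
  simp [getX, Nat.mod_lt _ hv]

lemma chain_eq {n W u v κ : ℕ} (hv : 0 < v) (hn : W + 2 * u ≤ n) {X : Fin v → Bits u}
    (hX : Function.Injective X) (Z : SymQ n v → Bits n) (k : ℕ) :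
    lineChain n u v W κ (Z ∘ phiS W Finset.univ X) X k = sChain n u v W κ hv Z k := by
  induction k with
  | zero => rfl
  | succ k ih =>
    simp only [lineChain, sChain, Function.comp_apply, ih, getX_mod hv, phi_lineStr hn hX]

lemma branch_eq {n W u v κ : ℕ} (hv : 0 < v) (hn : W + 2 * u ≤ n) {X : Fin v → Bits u}
    (hX : Function.Injective X) (Z : SymQ n v → Bits n) (j : ℕ) (a : ℕ → Fin v) (c : ℕ) :
    phiS W Finset.univ X (branchE n u v W κ (Z ∘ phiS W Finset.univ X) X j a c)
      = sF n u v W κ hv Z j a c := by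
  induction c with
  | zero =>
    simp only [branchE, lineE, sF, chain_eq hv hn hX, getX_mod hv, phi_lineStr hn hX]
  | succ c ih =>
    simp only [branchE, sF, phi_lineStr hn hX, Function.comp_apply, ih]

lemma mod_eq {n W u v κ p : ℕ} (hv : 0 < v) (hn : W + 2 * u ≤ n) {X : Fin v → Bits u}
    (hX : Function.Injective X) (Z : SymQ n v → Bits n) (j : ℕ) (a : ℕ → Fin v) :
    modRO n u v W κ p (Z ∘ phiS W Finset.univ X) X j a =
      sMod n u v W κ p hv Z j a ∘ phiS W Finset.univ X := by
  funext y
  have key : ∀ t, (t < p ∧ branchE n u v W κ (Z ∘ phiS W Finset.univ X) X j a t = y) ↔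
      (t < p ∧ sF n u v W κ hv Z j a t = phiS W Finset.univ X y) := by
    intro t
    rw [← branch_eq hv hn hX, (phiS_injective W Finset.univ X).eq_iff]
  simp only [modRO, sMod, Function.comp_apply]
  simp only [key]

lemma branch_congr {n W u v κ : ℕ} {RO : Bits n → Bits n} {X : Fin v → Bits u} {j : ℕ}
    {a a' : ℕ → Fin v} (c : ℕ) (h : ∀ t, 1 ≤ t → t ≤ c → a t = a' t) :
    branchE n u v W κ RO X j a c = branchE n u v W κ RO X j a' c := by
  induction c with
  | zero => rfl
  | succ c ih =>
    simp only [branchE]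
    rw [ih (fun t h1 h2 => h t h1 (by omega)), h (c + 1) (by omega) le_rfl]

lemma mod_congr {n W u v κ p : ℕ} {RO : Bits n → Bits n} {X : Fin v → Bits u} {j : ℕ}
    {a a' : ℕ → Fin v} (h : ∀ t, 1 ≤ t → t ≤ p → a t = a' t) :
    modRO n u v W κ p RO X j a = modRO n u v W κ p RO X j a' := by
  funext y
  have key : ∀ t, (t < p ∧ branchE n u v W κ RO X j a t = y) ↔
      (t < p ∧ branchE n u v W κ RO X j a' t = y) := by
    intro t
    refine and_congr_right fun ht => ?_
    rw [branch_congr t (fun t' h1 h2 => h t' h1 (by omega))]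
  unfold modRO
  simp only [key]
  split_ifs with hex
  · have := h (Nat.find hex + 1) (by omega) (by have := (Nat.find_spec hex).1; omega)
    rw [this]
  · rfl

/-- Extend a finite sequence `a_1, …, a_p`. -/
def extSeq {v p : ℕ} (hv : 0 < v) (g : Fin p → Fin v) : ℕ → Fin v := fun t =>
  if h : t - 1 < p then g ⟨t - 1, h⟩ else ⟨0, hv⟩

lemma extSeq_eq {v p : ℕ} (hv : 0 < v) (g : ℕ → Fin v) (t : ℕ) (h1 : 1 ≤ t) (h2 : t ≤ p) :
    g t = extSeq hv (fun i : Fin p => g (i + 1)) t := by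
  have h3 : t - 1 < p := by omega
  have h4 : t - 1 + 1 = t := by omega
  simp [extSeq, h3, h4]

/-- The set `B` for fixed `j0` and fixed machine query function. -/
def Bfix (n u v W κ p q : ℕ) (f : List (Bits n) → Bits n) (j0 : ℕ)
    (RO : Bits n → Bits n) (X : Fin v → Bits u) : Set (Fin v) :=
  {a0 | ∃ g : ℕ → Fin v, ∃ b, 1 ≤ b ∧ b ≤ p ∧ g b = a0 ∧ ∃ t < q,
    advQ n (modRO n u v W κ p RO X j0 g) f t = branchE n u v W κ RO X j0 g b}

lemma Bfix_sub {n W u v κ p q : ℕ} (hv : 0 < v) (hn : W + 2 * u ≤ n) {X : Fin v → Bits u}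
    (hX : Function.Injective X) (Z : SymQ n v → Bits n) (j0 : ℕ) (f : List (Bits n) → Bits n) :
    Bfix n u v W κ p q f j0 (Z ∘ phiS W Finset.univ X) X ⊆
      hitSet q W f (fun g : Fin p → Fin v => sMod n u v W κ p hv Z j0 (extSeq hv g)) X := by
  rintro a0 ⟨g, b, hb1, hbp, hgb, t, ht, hq⟩
  simp only [hitSet, Finset.coe_filter, Finset.mem_univ, true_and, Set.mem_setOf_eq]
  refine ⟨fun i => g (i + 1), t, ht, ?_⟩
  rw [← mod_eq hv hn hX, ← mod_congr (extSeq_eq hv g), hq]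
  obtain ⟨c, rfl⟩ : ∃ c, b = c + 1 := ⟨b - 1, by omega⟩
  simp only [branchE]
  rw [xpart_lineStr hn, hgb]

open Classical in
lemma card_comp {α Ω β : Type} [Fintype α] [Fintype Ω] [Fintype β] (φ : α → Ω)
    (hφ : Function.Injective φ) (Q : (α → β) → Prop) :
    (Finset.univ.filter (fun Z : Ω → β => Q (Z ∘ φ))).card * Fintype.card (α → β) =
      (Finset.univ.filter Q).card * Fintype.card (Ω → β) := by
  let e1 : (Ω → β) ≃ ({x // x ∈ Set.range φ} → β) × ({x // ¬ x ∈ Set.range φ} → β) :=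
    Equiv.piEquivPiSubtypeProd (fun x => x ∈ Set.range φ) (fun _ => β)
  let e2 : ({x // x ∈ Set.range φ} → β) ≃ (α → β) :=
    Equiv.arrowCongr (Equiv.ofInjective φ hφ).symm (Equiv.refl β)
  let e : (Ω → β) ≃ (α → β) × ({x // ¬ x ∈ Set.range φ} → β) :=
    e1.trans (Equiv.prodCongr e2 (Equiv.refl _))
  have he : ∀ Z, (e Z).1 = Z ∘ φ := by
    intro Z
    funext x
    simp [e, e1, e2, Equiv.arrowCongr, Equiv.piEquivPiSubtypeProd]
  have hc : (Finset.univ.filter (fun Z : Ω → β => Q (Z ∘ φ))).card =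
      ((Finset.univ.filter Q) ×ˢ
        (Finset.univ : Finset ({x // ¬ x ∈ Set.range φ} → β))).card := by
    apply Finset.card_equiv e
    intro Z
    simp [he]
  have hT : Fintype.card (Ω → β) =
      Fintype.card (α → β) * Fintype.card ({x // ¬ x ∈ Set.range φ} → β) := by
    rw [← Fintype.card_prod]; exact Fintype.card_congr e
  rw [hc, hT, Finset.card_product, Finset.card_univ]
  ring

open Classical in
/-- The bad event for fixed state and fixed `j0`. -/
noncomputable def badEv (n u v W κ p q : ℕ) (f : List (Bits n) → Bits n) (j0 N : ℕ) :
    Finset ((Bits n → Bits n) × (Fin v → Bits u)) :=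
  Finset.univ.filter (fun ω => Function.Injective ω.2 ∧
    N ≤ (Bfix n u v W κ p q f j0 ω.1 ω.2).ncard)

open Classical in
lemma card_filter_prod {α β : Type} [Fintype α] [Fintype β] (P : α → β → Prop) :
    (Finset.univ.filter (fun ω : α × β => P ω.1 ω.2)).card =
      ∑ b : β, (Finset.univ.filter (fun a => P a b)).card := by
  simp only [Finset.card_filter]
  rw [← Finset.univ_product_univ, Finset.sum_product_right]

open Classical in
lemma card_filter_prod' {α β : Type} [Fintype α] [Fintype β] (P : α → β → Prop) :
    (Finset.univ.filter (fun ω : α × β => P ω.1 ω.2)).card =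
      ∑ a : α, (Finset.univ.filter (fun b => P a b)).card := by
  simp only [Finset.card_filter]
  rw [← Finset.univ_product_univ, Finset.sum_product]

open Classical in
lemma double_count {α Ω β ξ : Type} [Fintype α] [Fintype Ω] [Fintype β] [Fintype ξ]
    (φ : ξ → α → Ω) (hφ : ∀ X, Function.Injective (φ X)) (P : (α → β) → ξ → Prop) :
    (Finset.univ.filter (fun ω : (α → β) × ξ => P ω.1 ω.2)).card * Fintype.card (Ω → β) =
      (∑ Z : Ω → β, (Finset.univ.filter (fun X => P (Z ∘ φ X) X)).card) *
        Fintype.card (α → β) := by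
  rw [card_filter_prod, ← card_filter_prod' (fun (Z : Ω → β) X => P (Z ∘ φ X) X),
    card_filter_prod (fun (Z : Ω → β) X => P (Z ∘ φ X) X), Finset.sum_mul, Finset.sum_mul]
  refine Finset.sum_congr rfl fun X _ => ?_
  exact (card_comp (φ X) (hφ X) (fun RO => P RO X)).symm

open Classical in
lemma badEv_card {n W u v κ p q : ℕ} (hv : 0 < v) (hn : W + 2 * u ≤ n)
    (f : List (Bits n) → Bits n) (j0 N : ℕ) :
    (badEv n u v W κ p q f j0 N).card * (2 ^ u) ^ N ≤
      (v ^ p * q * v) ^ N * Fintype.card ((Bits n → Bits n) × (Fin v → Bits u)) := by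
  obtain ⟨P, hP⟩ : ∃ P : (Bits n → Bits n) → (Fin v → Bits u) → Prop, ∀ RO X, P RO X ↔
    (Function.Injective X ∧ N ≤ (Bfix n u v W κ p q f j0 RO X).ncard) :=
    ⟨fun RO X => _, fun RO X => Iff.rfl⟩
  have hb : badEv n u v W κ p q f j0 N =
      Finset.univ.filter (fun ω : (Bits n → Bits n) × (Fin v → Bits u) => P ω.1 ω.2) := by
    ext ω
    rw [badEv, Finset.mem_filter, Finset.mem_filter, hP]
  have h2 : (badEv n u v W κ p q f j0 N).card * Fintype.card (SymQ n v → Bits n) =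
      (∑ Z : SymQ n v → Bits n, (Finset.univ.filter
        (fun X : Fin v → Bits u => P (Z ∘ phiS W Finset.univ X) X)).card) *
        Fintype.card (Bits n → Bits n) := by
    rw [hb]
    convert double_count (phiS W Finset.univ) (fun X => phiS_injective W Finset.univ X) P
  have h4 : ∀ Z : SymQ n v → Bits n, (Finset.univ.filter
        (fun X : Fin v → Bits u => P (Z ∘ phiS W Finset.univ X) X)).card * (2 ^ u) ^ N ≤
        (v ^ p * q * v) ^ N * (2 ^ u) ^ v := by
    intro Z
    have hc := count_badX q W f
      (fun g : Fin p → Fin v => sMod n u v W κ p hv Z j0 (extSeq hv g)) N ∅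
      (fun _ _ => false : Fin v → Bits u)
    simp only [Finset.card_empty, pow_zero, mul_one, Fintype.card_fun, Fintype.card_fin] at hc
    refine le_trans (Nat.mul_le_mul_right _ (Finset.card_le_card ?_)) hc
    intro X hX
    simp only [Finset.mem_filter, Finset.mem_univ, true_and, hP] at hX
    simp only [badX, Finset.mem_filter, Finset.mem_univ, true_and]
    refine ⟨hX.1, by simp, ?_⟩
    rw [Finset.sdiff_empty]
    refine hX.2.trans ?_
    rw [← Set.ncard_coe_finset]
    exact Set.ncard_le_ncard (Bfix_sub hv hn hX.1 Z j0 f) (Finset.finite_toSet _)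
  have hpos : 0 < Fintype.card (SymQ n v → Bits n) := Fintype.card_pos
  refine Nat.le_of_mul_le_mul_right ?_ hpos
  have hXc : Fintype.card (Fin v → Bits u) = (2 ^ u) ^ v := by simp
  calc (badEv n u v W κ p q f j0 N).card * (2 ^ u) ^ N * Fintype.card (SymQ n v → Bits n)
      = ((badEv n u v W κ p q f j0 N).card * Fintype.card (SymQ n v → Bits n))
          * (2 ^ u) ^ N := by ring
    _ = (∑ Z : SymQ n v → Bits n, (Finset.univ.filter
        (fun X : Fin v → Bits u => P (Z ∘ phiS W Finset.univ X) X)).card * (2 ^ u) ^ N) *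
        Fintype.card (Bits n → Bits n) := by
        rw [h2, ← Finset.sum_mul]; ring
    _ ≤ (∑ Z : SymQ n v → Bits n, (v ^ p * q * v) ^ N * (2 ^ u) ^ v) *
        Fintype.card (Bits n → Bits n) :=
        Nat.mul_le_mul_right _ (Finset.sum_le_sum fun Z _ => h4 Z)
    _ = (v ^ p * q * v) ^ N * Fintype.card ((Bits n → Bits n) × (Fin v → Bits u)) *
        Fintype.card (SymQ n v → Bits n) := by
        rw [Finset.sum_const, smul_eq_mul, Finset.card_univ, Fintype.card_prod, hXc]; ring

open Classical in
lemma pair_card {u v : ℕ} (a b : Fin v) (hab : a ≠ b) :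
    (Finset.univ.filter (fun X : Fin v → Bits u => X a = X b)).card * 2 ^ u ≤
      (2 ^ u) ^ v := by
  have h : (Finset.univ.filter (fun X : Fin v → Bits u => X a = X b)) ⊆
      Finset.univ.biUnion (fun y : Bits u => Finset.univ.filter
        (fun X : Fin v → Bits u => ∀ c ∈ ({a, b} : Finset (Fin v)), X c = y)) := by
    intro X hX
    simp only [Finset.mem_filter, Finset.mem_univ, true_and] at hX
    simp [hX]
  have h2 := (Finset.card_le_card h).trans Finset.card_biUnion_le
  have h3 : ∀ y : Bits u, (Finset.univ.filter
        (fun X : Fin v → Bits u => ∀ c ∈ ({a, b} : Finset (Fin v)), X c = y)).card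
        * (2 ^ u) ^ 2 ≤ (2 ^ u) ^ v := by
    intro y
    have := agree_card ({a, b} : Finset (Fin v)) (fun _ => y)
    rwa [Finset.card_pair hab] at this
  have hp : 0 < 2 ^ u := by positivity
  refine Nat.le_of_mul_le_mul_right (c := 2 ^ u) ?_ hp
  calc _ ≤ (∑ y : Bits u, (Finset.univ.filter
        (fun X : Fin v → Bits u => ∀ c ∈ ({a, b} : Finset (Fin v)), X c = y)).card)
        * 2 ^ u * 2 ^ u := by gcongr
    _ = ∑ y : Bits u, (Finset.univ.filter
        (fun X : Fin v → Bits u => ∀ c ∈ ({a, b} : Finset (Fin v)), X c = y)).card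
        * (2 ^ u) ^ 2 := by rw [← Finset.sum_mul]; ring
    _ ≤ ∑ y : Bits u, (2 ^ u) ^ v := Finset.sum_le_sum fun y _ => h3 y
    _ = _ := by simp; ring

open Classical in
lemma noninj_card {n u v : ℕ} :
    (Finset.univ.filter (fun ω : (Bits n → Bits n) × (Fin v → Bits u) =>
      ¬ Function.Injective ω.2)).card * 2 ^ u ≤
      v ^ 2 * Fintype.card ((Bits n → Bits n) × (Fin v → Bits u)) := by
  have h0 : (Finset.univ.filter (fun X : Fin v → Bits u => ¬ Function.Injective X)).card * 2 ^ u
      ≤ v ^ 2 * (2 ^ u) ^ v := by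
    have hs : (Finset.univ.filter (fun X : Fin v → Bits u => ¬ Function.Injective X)) ⊆
        (Finset.univ.filter (fun ab : Fin v × Fin v => ab.1 ≠ ab.2)).biUnion
          (fun ab => Finset.univ.filter (fun X : Fin v → Bits u => X ab.1 = X ab.2)) := by
      intro X hX
      have hX := (Finset.mem_filter.mp hX).2
      unfold Function.Injective at hX
      push Not at hX
      obtain ⟨a, b, h1, h2⟩ := hX
      simp only [Finset.mem_biUnion, Finset.mem_filter, Finset.mem_univ, true_and]
      exact ⟨(a, b), h2, h1⟩
    have h2 := (Finset.card_le_card hs).trans Finset.card_biUnion_le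
    calc _ ≤ _ := Nat.mul_le_mul_right _ h2
      _ = _ := Finset.sum_mul _ _ _
      _ ≤ ∑ ab ∈ (Finset.univ.filter (fun ab : Fin v × Fin v => ab.1 ≠ ab.2)), (2 ^ u) ^ v :=
          Finset.sum_le_sum fun ab hab => pair_card _ _ (by simpa using hab)
      _ = (Finset.univ.filter (fun ab : Fin v × Fin v => ab.1 ≠ ab.2)).card * (2 ^ u) ^ v := by
          rw [Finset.sum_const, smul_eq_mul]
      _ ≤ _ := by
          refine Nat.mul_le_mul_right _ ((Finset.card_le_univ _).trans (le_of_eq ?_))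
          simp [sq]
  have h1 : (Finset.univ.filter (fun ω : (Bits n → Bits n) × (Fin v → Bits u) =>
      ¬ Function.Injective ω.2)).card = ∑ _a : Bits n → Bits n,
      (Finset.univ.filter (fun X : Fin v → Bits u => ¬ Function.Injective X)).card := by
    convert card_filter_prod' (fun (_ : Bits n → Bits n) (X : Fin v → Bits u) =>
      ¬ Function.Injective X)
  have hXc : Fintype.card (Fin v → Bits u) = (2 ^ u) ^ v := by simp
  rw [h1, Finset.sum_const, smul_eq_mul, Finset.card_univ, Fintype.card_prod, hXc]
  calc _ = Fintype.card (Bits n → Bits n) * ((Finset.univ.filter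
        (fun X : Fin v → Bits u => ¬ Function.Injective X)).card * 2 ^ u) := by ring
    _ ≤ Fintype.card (Bits n → Bits n) * (v ^ 2 * (2 ^ u) ^ v) := Nat.mul_le_mul_left _ h0
    _ = _ := by ring

lemma jkIdx_mem {n u v W κ w s q m : ℕ} (hw : 1 ≤ w) (A : MPC n s q m (Fin v → Bits u))
    (RO : Bits n → Bits n) (X : Fin v → Bits u) (k : ℕ) :
    jkIdx n u v W κ w s q m A RO X k - 1 < w := by
  have : jkIdx n u v W κ w s q m A RO X k ≤ w := by
    unfold jkIdx
    refine max_le ?_ hw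
    exact csSup_le' (fun j hj => hj.2.1)
  omega

/-- **Lemma 3.5 (up to an absolute constant `K`).**
In the Line setting with `u > (p+2)·log₂ v + log₂ q` and
`h := s/(u − (p+2)·log₂ v − log₂ q) + 1`, for every deterministic MPC algorithm, every
machine `i` and every round `k ≥ 0`, the probability over uniformly random `(RO, X)`
that `|B_i^{(k)}| > h` while the event `E^{(k)}` does not occur is at most
`K·w·2^(−(u − (p+2)·log₂ v − log₂ q))`. -/
theorem stmt14 : ∃ K : ℝ, 0 < K ∧
    ∀ (n u v w κ p W s q m : ℕ),
    1 ≤ u → 2 ≤ w → 1 ≤ κ → v = 2 ^ κ →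
    p = ⌈(Real.logb 2 w) ^ 2⌉₊ → W = Nat.clog 2 (w + p + 2) →
    W + 2 * u ≤ n → κ + u ≤ n → 1 ≤ q → 1 ≤ m →
    ((p : ℝ) + 2) * Real.logb 2 v + Real.logb 2 q < (u : ℝ) →
    ∀ h : ℝ, h = (s : ℝ) / ((u : ℝ) - ((p : ℝ) + 2) * Real.logb 2 v - Real.logb 2 q) + 1 →
    ∀ (A : MPC n s q m (Fin v → Bits u)) (i : Fin m) (k : ℕ),
    unifProb (fun ω : (Bits n → Bits n) × (Fin v → Bits u) =>
      h < ((Bset n u v W κ p w s q m A ω.1 ω.2 k i).ncard : ℝ) ∧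
      ¬ (∃ k2 ≤ k, ∃ i2 : Fin m, ∃ t2 < q, ∃ j, 1 ≤ j ∧ j ≤ w ∧ ∃ b ≤ p, ∃ a : ℕ → Fin v,
        mquery A ω.1 ω.2 k2 i2 t2 = branchE n u v W κ ω.1 ω.2 j a b ∧
        ∀ (k1 : ℕ) (i1 : Fin m) (t1 : ℕ), k1 ≤ k → t1 < q →
          (k1 < k2 ∨ (k1 = k2 ∧ i1 = i2 ∧ t1 < t2)) →
          mquery A ω.1 ω.2 k1 i1 t1 ≠
            (if b = 0 then lineE n u v W κ ω.1 ω.2 (j - 1)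
             else branchE n u v W κ ω.1 ω.2 j a (b - 1)))) ≤
    K * (w : ℝ) *
      (2 : ℝ) ^ (-((u : ℝ) - ((p : ℝ) + 2) * Real.logb 2 v - Real.logb 2 q)) := by
  refine ⟨2, by norm_num, ?_⟩
  intro n u v w κ p W s q m hu hw hκ hvκ hp hW hn hn2 hq hm hΔ h hh A i k
  classical
  have hv : 0 < v := by rw [hvκ]; positivity
  set Δ : ℝ := (u : ℝ) - ((p : ℝ) + 2) * Real.logb 2 v - Real.logb 2 q with hΔdef
  have hΔpos : 0 < Δ := by rw [hΔdef]; linarith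
  have hvR : (1 : ℝ) ≤ (v : ℝ) := by exact_mod_cast hv
  have hqR : (1 : ℝ) ≤ (q : ℝ) := by exact_mod_cast hq
  have hwR : (2 : ℝ) ≤ (w : ℝ) := by exact_mod_cast hw
  set θ : ℝ := (2 : ℝ) ^ (-Δ) with hθ
  have hθpos : 0 < θ := by positivity
  -- the value of θ
  have hθval : θ = (v : ℝ) ^ (p + 2) * q / 2 ^ u := by
    have e : -Δ = Real.logb 2 v * ((p + 2 : ℕ) : ℝ) + Real.logb 2 q - (u : ℝ) := by
      rw [hΔdef]; push_cast; ring
    rw [hθ, e, Real.rpow_sub (by norm_num), Real.rpow_add (by norm_num),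
      Real.rpow_mul (by norm_num), Real.rpow_logb (by norm_num) (by norm_num) (by linarith),
      Real.rpow_logb (by norm_num) (by norm_num) (by linarith), Real.rpow_natCast,
      Real.rpow_natCast]
  have h0 : 0 ≤ h := by rw [hh]; positivity
  set N : ℕ := ⌊h⌋₊ + 1 with hN
  have hNh : h < (N : ℝ) := by rw [hN]; push_cast; exact Nat.lt_floor_add_one h
  let Om := (Bits n → Bits n) × (Fin v → Bits u)
  let NI : Finset Om := Finset.univ.filter (fun ω => ¬ Function.Injective ω.2)
  let BE : Bits s × Fin w → Finset Om := fun Mj =>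
    badEv n u v W κ p q (A.qf k i Mj.1) Mj.2 N
  have hD : (0 : ℝ) < (Fintype.card Om : ℝ) := by exact_mod_cast Fintype.card_pos
  have h2u : (0 : ℝ) < 2 ^ u := by positivity
  have hNI : (NI.card : ℝ) ≤ θ * Fintype.card Om := by
    have h1 : NI.card * 2 ^ u ≤ v ^ 2 * Fintype.card Om := noninj_card
    have h2 : (NI.card : ℝ) * 2 ^ u ≤ (v : ℝ) ^ 2 * Fintype.card Om := by exact_mod_cast h1
    have h3 : (v : ℝ) ^ 2 ≤ (v : ℝ) ^ (p + 2) * q := by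
      calc (v : ℝ) ^ 2 ≤ (v : ℝ) ^ (p + 2) := pow_le_pow_right₀ hvR (by omega)
        _ ≤ _ := le_mul_of_one_le_right (by positivity) hqR
    rw [hθval, div_mul_eq_mul_div, le_div_iff₀ h2u]
    exact h2.trans (by gcongr)
  have hBE : ∀ Mj, ((BE Mj).card : ℝ) ≤ θ ^ N * Fintype.card Om := by
    intro Mj
    have h1 : (BE Mj).card * (2 ^ u) ^ N ≤ (v ^ p * q * v) ^ N * Fintype.card Om :=
      badEv_card hv hn _ _ _
    have h2 : ((BE Mj).card : ℝ) * (2 ^ u) ^ N ≤ ((v : ℝ) ^ p * q * v) ^ N * Fintype.card Om := by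
      exact_mod_cast h1
    have h3 : (v : ℝ) ^ p * q * v ≤ (v : ℝ) ^ (p + 2) * q := by
      have : (v : ℝ) ^ (p + 2) * q = ((v : ℝ) ^ p * q * v) * v := by ring
      rw [this]
      exact le_mul_of_one_le_right (by positivity) hvR
    rw [hθval, div_pow, div_mul_eq_mul_div, le_div_iff₀ (by positivity)]
    exact h2.trans (by gcongr)
  have hθN : (2 : ℝ) ^ s * θ ^ N ≤ θ := by
    rw [hθ, ← Real.rpow_natCast, ← Real.rpow_natCast, ← Real.rpow_mul (by norm_num),
      ← Real.rpow_add (by norm_num)]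
    apply Real.rpow_le_rpow_of_exponent_le (by norm_num)
    have h1 : Δ * h = s + Δ := by rw [hh]; field_simp
    nlinarith [mul_lt_mul_of_pos_left hNh hΔpos]
  have hsub : ∀ P : Om → Prop, {ω : Om |
      h < ((Bset n u v W κ p w s q m A ω.1 ω.2 k i).ncard : ℝ) ∧ P ω} ⊆
      ((NI ∪ Finset.univ.biUnion BE : Finset Om) : Set Om) := by
    rintro P ω ⟨hω, -⟩
    rw [Finset.mem_coe, Finset.mem_union]
    by_cases hinj : Function.Injective ω.2
    · right
      rw [Finset.mem_biUnion]
      refine ⟨(mstate A ω.1 ω.2 k i,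
        ⟨jkIdx n u v W κ w s q m A ω.1 ω.2 k - 1, jkIdx_mem (by omega) A ω.1 ω.2 k⟩),
        Finset.mem_univ _, ?_⟩
      simp only [BE, badEv, Finset.mem_filter, Finset.mem_univ, true_and]
      refine ⟨hinj, ?_⟩
      rw [hN, Nat.succ_le_iff, Nat.floor_lt h0]
      exact hω
    · left
      simp only [NI, Finset.mem_filter, Finset.mem_univ, true_and]
      exact hinj
  unfold unifProb
  rw [div_le_iff₀ hD]
  refine le_trans (Nat.cast_le.mpr (Set.ncard_le_ncard (hsub _) (Finset.finite_toSet _))) ?_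
  rw [Set.ncard_coe_finset]
  have hc2 : ((NI ∪ Finset.univ.biUnion BE).card : ℝ) ≤
      NI.card + ∑ Mj, ((BE Mj).card : ℝ) := by
    have := (Finset.card_union_le NI (Finset.univ.biUnion BE)).trans
      (Nat.add_le_add_left Finset.card_biUnion_le _)
    exact_mod_cast this
  have hc3 : ∑ Mj, ((BE Mj).card : ℝ) ≤ w * (θ * Fintype.card Om) := by
    calc ∑ Mj, ((BE Mj).card : ℝ) ≤ ∑ Mj : Bits s × Fin w, θ ^ N * Fintype.card Om :=
          Finset.sum_le_sum fun Mj _ => hBE Mj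
      _ = w * ((2 ^ s * θ ^ N) * Fintype.card Om) := by
          rw [Finset.sum_const, Finset.card_univ, nsmul_eq_mul]
          simp only [Fintype.card_prod, Fintype.card_fun, Fintype.card_bool, Fintype.card_fin]
          push_cast
          ring
      _ ≤ _ := by gcongr
  have hfin : (0 : ℝ) ≤ (w - 1) * (θ * Fintype.card Om) := by
    apply mul_nonneg (by linarith) (by positivity)
  have : ((NI ∪ Finset.univ.biUnion BE).card : ℝ) ≤ 2 * w * θ * Fintype.card Om := by
    linarith
  exact this
end

section
/- There is an absolute constant K such that the following holds in the Line setting. Assume u > (p+2)·log₂ v + log₂ q and let h := s/(u − (p+2)·log₂ v − log₂ q) + 1. Fix a deterministic MPC algorithm with m machines, local memory s bits, and at most q oracle queries per machine per round, a machine i, and a round k ≥ 0. If the probability over uniformly random (RO, X) that |B_i^{(k)}| > h and E^{(k)} does not occur equals ε, then there exist a set F of pairs (RO, X) with |F| ≥ ε·2^(n·2^n + u·v) and an injective function Enc from F into binary strings such that, for every (RO, X) ∈ F, |Enc(RO, X)| ≤ n·2^n + s + h·((p+2)·log₂ v + log₂ q) + (v − h)·u + K·log₂ w. -/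
namespace L15

/-- The fixed data of the decoder: parameters, the list of paths, and the query function. -/
structure Dat (n u v : ℕ) where
  (W κ p q H j0 : ℕ)
  g : ℕ → ℕ → Fin v
  f : List (Bits n) → Bits n
  hn : W + 2 * u ≤ n
  hκ : κ + u ≤ n
  hW : j0 + p + 1 < 2 ^ W
  hv : 0 < v

abbrev Om (n u v : ℕ) := (Bits n → Bits n) × (Fin v → Bits u)

section core
variable {n u v : ℕ} (D : Dat n u v) (ω : Om n u v)

def rho (y : Bits n) : Bits u := fun t => bitAt (ω.1 y) (D.κ + (t : ℕ))

def node (i τ : ℕ) : Bits n :=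
  if τ < D.j0 then lineE n u v D.W D.κ ω.1 ω.2 τ
  else branchE n u v D.W D.κ ω.1 ω.2 D.j0 (D.g i) (τ - D.j0)

def rs (i : ℕ) : ℕ → Bits u
  | 0 => fun _ => false
  | τ + 1 => rho D ω (node D ω i τ)

def ptr (i τ : ℕ) : Fin v :=
  if τ ≤ D.j0 then ⟨(lineChain n u v D.W D.κ ω.1 ω.2 τ).1 % v, Nat.mod_lt _ D.hv⟩
  else D.g i (τ - D.j0)

def xpart (y : Bits n) : Bits u := fun t => bitAt y (D.W + (t : ℕ))
def rpart (y : Bits n) : Bits u := fun t => bitAt y (D.W + u + (t : ℕ))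

theorem xpart_lineStr (a : ℕ) (x r : Bits u) : xpart D (lineStr n D.W u a x r) = x := by
  funext t
  have := D.hn
  have ht := t.2
  have h1 : D.W + (t : ℕ) < n := by omega
  simp [xpart, bitAt, lineStr, h1]

theorem rpart_lineStr (a : ℕ) (x r : Bits u) : rpart D (lineStr n D.W u a x r) = r := by
  funext t
  have := D.hn
  have ht := t.2
  have h1 : D.W + u + (t : ℕ) < n := by omega
  have h2 : ¬ (D.W + u + (t : ℕ) < D.W) := by omega
  have h3 : (D.W + u + (t : ℕ) < D.W + 2 * u) := by omega
  have h4 : D.W + u + (t : ℕ) - D.W - u = t := by omega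
  simp [rpart, bitAt, lineStr, h1, h2, h3, h4]

theorem level_lineStr {a b : ℕ} {x r x' r' : Bits u} (ha : a < 2 ^ D.W) (hb : b < 2 ^ D.W)
    (h : lineStr n D.W u a x r = lineStr n D.W u b x' r') : a = b := by
  apply Nat.eq_of_testBit_eq
  intro i
  by_cases hi : i < D.W
  · have hn := D.hn
    have := congrFun h ⟨i, by omega⟩
    simpa [lineStr, hi] using this
  · have h2 : 2 ^ D.W ≤ 2 ^ i := Nat.pow_le_pow_right (by norm_num) (by omega)
    rw [Nat.testBit_lt_two_pow (by omega), Nat.testBit_lt_two_pow (by omega)]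

theorem lineE_eq_lineStr (i τ : ℕ) (h : τ ≤ D.j0) :
    lineE n u v D.W D.κ ω.1 ω.2 τ = lineStr n D.W u (τ + 1) (ω.2 (ptr D ω i τ)) (rs D ω i τ) := by
  have hx : getX ω.2 ((lineChain n u v D.W D.κ ω.1 ω.2 τ).1 % v) = ω.2 (ptr D ω i τ) := by
    simp [getX, ptr, h, Nat.mod_lt _ D.hv]
  have hr : (lineChain n u v D.W D.κ ω.1 ω.2 τ).2 = rs D ω i τ := by
    cases τ with
    | zero => rfl
    | succ σ =>
      have : σ < D.j0 := by omega
      simp only [rs, node, this, if_true]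
      rfl
  rw [lineE, hx, hr]

theorem node_eq (i τ : ℕ) :
    node D ω i τ = lineStr n D.W u (τ + 1) (ω.2 (ptr D ω i τ)) (rs D ω i τ) := by
  by_cases h : τ < D.j0
  · rw [← lineE_eq_lineStr D ω i τ h.le]; simp [node, h]
  · by_cases h0 : τ = D.j0
    · rw [← lineE_eq_lineStr D ω i τ h0.le]; simp [node, h0, branchE]
    · obtain ⟨c, rfl⟩ : ∃ c, τ = D.j0 + c + 1 := ⟨τ - D.j0 - 1, by omega⟩
      have e1 : D.j0 + c + 1 - D.j0 = c + 1 := by omega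
      have e2 : ¬ (D.j0 + c + 1 ≤ D.j0) := by omega
      have e3 : ¬ (D.j0 + c < D.j0) := by omega
      have e4 : D.j0 + c - D.j0 = c := by omega
      simp only [node, h, if_false, e1, branchE, ptr, e2, rs, e3, e4]
      rfl

theorem node_low {τ : ℕ} (h : τ ≤ D.j0) (i i' : ℕ) : node D ω i τ = node D ω i' τ := by
  unfold node
  split_ifs with h1
  · rfl
  · have : τ - D.j0 = 0 := by omega
    rw [this]; rfl

theorem ptr_low {τ : ℕ} (h : τ ≤ D.j0) (i i' : ℕ) : ptr D ω i τ = ptr D ω i' τ := by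
  simp [ptr, h]

theorem ptr_high {τ : ℕ} (h : ¬ τ ≤ D.j0) (i : ℕ) : ptr D ω i τ = D.g i (τ - D.j0) := by
  simp [ptr, h]

theorem ptr_succ_low {τ : ℕ} (h : τ + 1 ≤ D.j0) (i : ℕ) :
    ptr D ω i (τ + 1) = ⟨natOf (ω.1 (node D ω i τ)) D.κ % v % v, Nat.mod_lt _ D.hv⟩ := by
  have : τ < D.j0 := by omega
  simp only [ptr, h, if_true, node, this]
  rfl

theorem rs_low {τ : ℕ} (h : τ ≤ D.j0) (i i' : ℕ) : rs D ω i τ = rs D ω i' τ := by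
  cases τ with
  | zero => rfl
  | succ τ => simp only [rs]; rw [node_low D ω (by omega) i i']

theorem xpart_node (i τ : ℕ) : xpart D (node D ω i τ) = ω.2 (ptr D ω i τ) := by
  rw [node_eq, xpart_lineStr]
theorem rpart_node (i τ : ℕ) : rpart D (node D ω i τ) = rs D ω i τ := by
  rw [node_eq, rpart_lineStr]
theorem level_node {ω1 ω2 : Om n u v} {i i' τ τ' : ℕ} (h : τ ≤ D.j0 + D.p) (h' : τ' ≤ D.j0 + D.p)
    (e : node D ω1 i τ = node D ω2 i' τ') : τ = τ' := by
  rw [node_eq, node_eq] at e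
  have := D.hW
  have := level_lineStr D (by omega) (by omega) e
  omega

/-- The queries made in the simulations, listed one simulation after the other. -/
noncomputable def yq (P : ℕ) : Bits n :=
  advQ n (modRO n u v D.W D.κ D.p ω.1 ω.2 D.j0 (D.g (P / D.q))) D.f (P % D.q)

def isNode (y : Bits n) : Prop := ∃ i < D.H, ∃ τ ≤ D.j0 + D.p, node D ω i τ = y

/-- `a` is read for the first time at position `P`. -/
def factX (a : Fin v) (P : ℕ) : Prop :=
  (isNode D ω (yq D ω P) ∧ xpart D (yq D ω P) = ω.2 a) ∧
    ∀ P' < P, ¬ (isNode D ω (yq D ω P') ∧ xpart D (yq D ω P') = ω.2 a)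

def factR (P i : ℕ) : Prop :=
  ∃ τ < D.j0 + D.p, node D ω i (τ + 1) = yq D ω P ∧ (∀ i' < i, node D ω i' (τ + 1) ≠ yq D ω P) ∧
    ∀ P' < P, ∀ i' < D.H, rs D ω i' (τ + 1) = rs D ω i (τ + 1) →
      yq D ω P' ≠ node D ω i' τ ∧ yq D ω P' ≠ node D ω i' (τ + 1)

/-- `i` is the least label of its node string on level `τ`. -/
def canon (i τ : ℕ) : Prop := ∀ i' < i, node D ω i' τ ≠ node D ω i τ

open Classical in
noncomputable def canonOf (i τ : ℕ) : ℕ := Nat.find (⟨i, rfl⟩ : ∃ i', node D ω i' τ = node D ω i τ)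

theorem canonOf_spec (i τ : ℕ) : node D ω (canonOf D ω i τ) τ = node D ω i τ := by
  classical
  exact Nat.find_spec (⟨i, rfl⟩ : ∃ i', node D ω i' τ = node D ω i τ)
theorem canonOf_le (i τ : ℕ) : canonOf D ω i τ ≤ i := by
  classical
  exact Nat.find_min' (⟨i, rfl⟩ : ∃ i', node D ω i' τ = node D ω i τ) rfl
theorem canonOf_congr {i i' τ : ℕ} (h : node D ω i τ = node D ω i' τ) :
    canonOf D ω i τ = canonOf D ω i' τ := by
  unfold canonOf; simp only [h]
theorem canon_canonOf (i τ : ℕ) : canon D ω (canonOf D ω i τ) τ := by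
  classical
  intro i' hi' h
  rw [canonOf_spec] at h
  exact Nat.find_min (⟨i, rfl⟩ : ∃ i', node D ω i' τ = node D ω i τ) hi' h
theorem canon_eq {i i' τ : ℕ} (h : canon D ω i τ) (h' : canon D ω i' τ)
    (e : node D ω i τ = node D ω i' τ) : i = i' := by
  rcases lt_trichotomy i i' with hl | hl | hl
  · exact absurd e (h' _ hl)
  · exact hl
  · exact absurd e.symm (h _ hl)

open Classical in
noncomputable def rank (i τ : ℕ) : ℕ :=
  if h : ∃ P, P < D.H * D.q ∧ yq D ω P = node D ω i τ then Nat.find h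
  else D.H * D.q + canonOf D ω i τ

theorem rank_congr {i i' τ : ℕ} (h : node D ω i τ = node D ω i' τ) :
    rank D ω i τ = rank D ω i' τ := by
  unfold rank; simp only [h, canonOf_congr D ω h]

theorem rank_le {i τ P : ℕ} (hP : P < D.H * D.q) (h : yq D ω P = node D ω i τ) :
    rank D ω i τ ≤ P := by
  classical
  have hh : ∃ P, P < D.H * D.q ∧ yq D ω P = node D ω i τ := ⟨P, hP, h⟩
  rw [rank, dif_pos hh]
  exact Nat.find_min' hh ⟨hP, h⟩

theorem rank_lt {i τ : ℕ} (hr : rank D ω i τ < D.H * D.q) :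
    yq D ω (rank D ω i τ) = node D ω i τ := by
  classical
  by_cases hh : ∃ P, P < D.H * D.q ∧ yq D ω P = node D ω i τ
  · rw [rank, dif_pos hh]; exact (Nat.find_spec hh).2
  · rw [rank, dif_neg hh] at hr; omega

theorem rank_unread {i τ : ℕ} (h : ∀ P < D.H * D.q, yq D ω P ≠ node D ω i τ) :
    rank D ω i τ = D.H * D.q + canonOf D ω i τ := by
  rw [rank, dif_neg]
  rintro ⟨P, hP, e⟩; exact h P hP e

theorem rank_inj {i i' τ : ℕ} (h : rank D ω i τ = rank D ω i' τ) :
    node D ω i τ = node D ω i' τ := by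
  by_cases h1 : rank D ω i τ < D.H * D.q
  · rw [← rank_lt D ω h1, ← rank_lt D ω (h ▸ h1), h]
  · have a : ∀ P < D.H * D.q, yq D ω P ≠ node D ω i τ := by
      intro P hP e; have := rank_le D ω hP e; omega
    have b : ∀ P < D.H * D.q, yq D ω P ≠ node D ω i' τ := by
      intro P hP e; have := rank_le D ω hP e; omega
    rw [rank_unread D ω a, rank_unread D ω b] at h
    rw [← canonOf_spec D ω i, ← canonOf_spec D ω i']
    congr 1; omega

def leader (i τ : ℕ) : Prop :=
  ∀ i' < D.H, rs D ω i' (τ + 1) = rs D ω i (τ + 1) → rank D ω i τ ≤ rank D ω i' τ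

theorem leader_congr {i i' τ : ℕ} (h : node D ω i τ = node D ω i' τ) (hl : leader D ω i τ) :
    leader D ω i' τ := by
  intro k hk e
  rw [← rank_congr D ω h]
  apply hl k hk
  rw [e]; simp only [rs, h]

theorem leader_unique {i i' τ : ℕ} (hi : i < D.H) (hi' : i' < D.H) (h : leader D ω i τ)
    (h' : leader D ω i' τ) (e : rs D ω i (τ + 1) = rs D ω i' (τ + 1)) :
    node D ω i τ = node D ω i' τ :=
  rank_inj D ω (le_antisymm (h i' hi' e.symm) (h' i hi e))

theorem exists_leader {i τ : ℕ} (hi : i < D.H) :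
    ∃ l < D.H, rs D ω l (τ + 1) = rs D ω i (τ + 1) ∧ leader D ω l τ ∧ canon D ω l τ := by
  classical
  obtain ⟨l, hl, hm⟩ := Finset.exists_min_image
    ((Finset.range D.H).filter (fun k => rs D ω k (τ + 1) = rs D ω i (τ + 1)))
    (fun k => rank D ω k τ) ⟨i, by simp [hi]⟩
  simp only [Finset.mem_filter, Finset.mem_range] at hl hm
  have hs := canonOf_spec D ω l τ
  have hrs : rs D ω (canonOf D ω l τ) (τ + 1) = rs D ω l (τ + 1) := by simp only [rs, hs]
  refine ⟨canonOf D ω l τ, lt_of_le_of_lt (canonOf_le D ω l τ) hl.1, ?_, ?_, canon_canonOf D ω l τ⟩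
  · rw [hrs, hl.2]
  · apply leader_congr D ω hs.symm
    intro k hk e
    exact hm k ⟨hk, e.trans hl.2⟩

/-- Coincidence facts on level `j0 + c`. -/
def factC (c i l : ℕ) : Prop :=
  canon D ω i (D.j0 + c) ∧ canon D ω l (D.j0 + c) ∧ ¬ leader D ω i (D.j0 + c) ∧
    leader D ω l (D.j0 + c) ∧ rs D ω i (D.j0 + c + 1) = rs D ω l (D.j0 + c + 1)

/-- some fresh child of the class of `node i τ` is read before the class. -/
def fresh (i τ : ℕ) : Prop :=
  ∃ P < D.H * D.q, ∃ i' < D.H, factR D ω P i' ∧ node D ω i' (τ + 1) = yq D ω P ∧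
    rs D ω i' (τ + 1) = rs D ω i (τ + 1)

/-- The erased strings. -/
def Zs : Set (Bits n) :=
  {z | ∃ i < D.H, ∃ τ < D.j0 + D.p, node D ω i τ = z ∧ (¬ leader D ω i τ ∨ fresh D ω i τ)}

/-- `ω'` agrees with `ω` outside of the erased parts. -/
def agree (ω' : Om n u v) : Prop :=
  (∀ y, ∀ b : Fin n, ((y ∈ Zs D ω ∧ D.κ ≤ (b : ℕ) ∧ (b : ℕ) < D.κ + u) ∨ ω'.1 y b = ω.1 y b)) ∧
  (∀ a, (∃ P < D.H * D.q, factX D ω a P) ∨ ω'.2 a = ω.2 a)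

end core

section core2
variable {n u v : ℕ} (D : Dat n u v)

/-- Two instances with the same facts and a common erased version. -/
structure Sh (ω1 ω2 : Om n u v) : Prop where
  i1 : Function.Injective ω1.2
  i2 : Function.Injective ω2.2
  fx : ∀ a, ∀ P < D.H * D.q, factX D ω1 a P ↔ factX D ω2 a P
  fr : ∀ P < D.H * D.q, ∀ i < D.H, factR D ω1 P i ↔ factR D ω2 P i
  fc : ∀ c < D.p, ∀ i < D.H, ∀ l < D.H, factC D ω1 c i l ↔ factC D ω2 c i l
  ag : ∃ ω', agree D ω1 ω' ∧ agree D ω2 ω'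

variable {D} {ω1 ω2 : Om n u v}

theorem Sh.symm (h : Sh D ω1 ω2) : Sh D ω2 ω1 where
  i1 := h.i2
  i2 := h.i1
  fx := fun a P hP => (h.fx a P hP).symm
  fr := fun P hP i hi => (h.fr P hP i hi).symm
  fc := fun c hc i hi l hl => (h.fc c hc i hi l hl).symm
  ag := by obtain ⟨x, a, b⟩ := h.ag; exact ⟨x, b, a⟩

theorem rho_congr {y1 y2 : Bits n} (h : ω1.1 y1 = ω2.1 y2) : rho D ω1 y1 = rho D ω2 y2 := by
  unfold rho; rw [h]

theorem rs_succ (ω : Om n u v) (i τ : ℕ) : rs D ω i (τ + 1) = rho D ω (node D ω i τ) := rfl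

theorem canonOf_pat {τ : ℕ}
    (h : ∀ i < D.H, ∀ i' < D.H, node D ω1 i τ = node D ω1 i' τ ↔ node D ω2 i τ = node D ω2 i' τ)
    {i : ℕ} (hi : i < D.H) : canonOf D ω1 i τ = canonOf D ω2 i τ := by
  have c1 := canonOf_le D ω1 i τ
  have c2 := canonOf_le D ω2 i τ
  have s1 := canonOf_spec D ω1 i τ
  have s2 := canonOf_spec D ω2 i τ
  rw [h _ (by omega) _ hi] at s1
  rw [← h _ (by omega) _ hi] at s2
  rcases lt_trichotomy (canonOf D ω1 i τ) (canonOf D ω2 i τ) with hl | hl | hl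
  · exact absurd (s1.trans (canonOf_spec D ω2 i τ).symm) (canon_canonOf D ω2 i τ _ hl)
  · exact hl
  · exact absurd (s2.trans (canonOf_spec D ω1 i τ).symm) (canon_canonOf D ω1 i τ _ hl)

theorem rs_of_node (ω : Om n u v) {i i' τ : ℕ} (h : node D ω i τ = node D ω i' τ) :
    rs D ω i (τ + 1) = rs D ω i' (τ + 1) := by simp only [rs, h]

/-- one direction of the class pattern -/
theorem pat_step (h : Sh D ω1 ω2) {c : ℕ} (hc : c < D.p)
    (hp : ∀ i < D.H, ∀ i' < D.H, node D ω1 i (D.j0 + c) = node D ω1 i' (D.j0 + c) ↔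
      node D ω2 i (D.j0 + c) = node D ω2 i' (D.j0 + c))
    {i i' : ℕ} (hi : i < D.H) (hi' : i' < D.H)
    (e : rs D ω1 i (D.j0 + c + 1) = rs D ω1 i' (D.j0 + c + 1)) :
    rs D ω2 i (D.j0 + c + 1) = rs D ω2 i' (D.j0 + c + 1) := by
  obtain ⟨l, hl, el, ll, cl⟩ := exists_leader D ω1 (τ := D.j0 + c) hi
  have key : ∀ k < D.H, rs D ω1 k (D.j0 + c + 1) = rs D ω1 l (D.j0 + c + 1) →
      rs D ω2 k (D.j0 + c + 1) = rs D ω2 l (D.j0 + c + 1) := by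
    intro k hk ek
    have hm := canonOf_spec D ω1 k (D.j0 + c)
    have hmk : canonOf D ω1 k (D.j0 + c) < D.H := lt_of_le_of_lt (canonOf_le _ _ _ _) hk
    have hm2 := (hp _ hmk _ hk).1 hm
    rw [← rs_of_node ω2 hm2]
    have e1 := rs_of_node ω1 hm
    by_cases hlead : leader D ω1 (canonOf D ω1 k (D.j0 + c)) (D.j0 + c)
    · have := leader_unique D ω1 hmk hl hlead ll (e1.trans ek)
      exact rs_of_node ω2 ((hp _ hmk _ hl).1 this)
    · have : factC D ω1 c (canonOf D ω1 k (D.j0 + c)) l :=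
        ⟨canon_canonOf _ _ _ _, cl, hlead, ll, e1.trans ek⟩
      exact ((h.fc c hc _ hmk _ hl).1 this).2.2.2.2
  exact (key i hi el.symm).trans (key i' hi' (e.symm.trans el.symm)).symm

theorem lineStr_inj_x {a : ℕ} {x x' r r' : Bits u}
    (h : lineStr n D.W u a x r = lineStr n D.W u a x' r') : x = x' := by
  have := congrArg (xpart D) h
  rwa [xpart_lineStr, xpart_lineStr] at this

theorem node_pat_succ {ω1 ω2 : Om n u v} (i1 : Function.Injective ω1.2) {τ : ℕ} (hτ : D.j0 ≤ τ) {i i' : ℕ}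
    (hr : rs D ω1 i (τ + 1) = rs D ω1 i' (τ + 1) → rs D ω2 i (τ + 1) = rs D ω2 i' (τ + 1))
    (e : node D ω1 i (τ + 1) = node D ω1 i' (τ + 1)) :
    node D ω2 i (τ + 1) = node D ω2 i' (τ + 1) := by
  have h1 : ω1.2 (ptr D ω1 i (τ + 1)) = ω1.2 (ptr D ω1 i' (τ + 1)) := by
    rw [← xpart_node, ← xpart_node, e]
  have h2 : rs D ω1 i (τ + 1) = rs D ω1 i' (τ + 1) := by
    rw [← rpart_node, ← rpart_node, e]
  have h3 := i1 h1
  rw [ptr_high D ω1 (by omega), ptr_high D ω1 (by omega)] at h3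
  rw [node_eq, node_eq, hr h2, ptr_high D ω2 (by omega), ptr_high D ω2 (by omega), h3]

theorem pat_high (h : Sh D ω1 ω2) : ∀ c ≤ D.p, ∀ i < D.H, ∀ i' < D.H,
    node D ω1 i (D.j0 + c) = node D ω1 i' (D.j0 + c) ↔
      node D ω2 i (D.j0 + c) = node D ω2 i' (D.j0 + c) := by
  intro c
  induction c with
  | zero =>
    intro _ i _ i' _
    exact ⟨fun _ => node_low D ω2 (by omega) _ _, fun _ => node_low D ω1 (by omega) _ _⟩
  | succ c ih =>
    intro hc i hi i' hi'
    have ih' := ih (by omega)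
    constructor
    · exact node_pat_succ (τ := D.j0 + c) h.i1 (Nat.le_add_right _ _) (pat_step h (by omega) ih' hi hi')
    · exact node_pat_succ (τ := D.j0 + c) h.i2 (Nat.le_add_right _ _) (pat_step h.symm (by omega)
        (fun a ha b hb => (ih' a ha b hb).symm) hi hi')

theorem pat_node (h : Sh D ω1 ω2) {τ : ℕ} (hτ : τ ≤ D.j0 + D.p) {i i' : ℕ} (hi : i < D.H)
    (hi' : i' < D.H) (e : node D ω1 i τ = node D ω1 i' τ) : node D ω2 i τ = node D ω2 i' τ := by
  by_cases hl : τ ≤ D.j0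
  · exact node_low D ω2 hl _ _
  · obtain ⟨c, rfl⟩ : ∃ c, τ = D.j0 + c := ⟨τ - D.j0, by omega⟩
    exact (pat_high h c (by omega) i hi i' hi').1 e

theorem pat_rs (h : Sh D ω1 ω2) {τ : ℕ} (hτ : τ < D.j0 + D.p) {i i' : ℕ} (hi : i < D.H)
    (hi' : i' < D.H) (e : rs D ω1 i (τ + 1) = rs D ω1 i' (τ + 1)) :
    rs D ω2 i (τ + 1) = rs D ω2 i' (τ + 1) := by
  by_cases hl : τ < D.j0
  · exact rs_low D ω2 (by omega) _ _
  · obtain ⟨c, rfl⟩ : ∃ c, τ = D.j0 + c := ⟨τ - D.j0, by omega⟩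
    exact pat_step h (by omega) (pat_high h c (by omega)) hi hi' e

/-- invariant at position `P` -/
def Inv (D : Dat n u v) (ω1 ω2 : Om n u v) (P : ℕ) : Prop :=
  yq D ω1 P = yq D ω2 P ∧
  (∀ i < D.H, ∀ τ ≤ D.j0 + D.p, node D ω1 i τ = yq D ω1 P ↔ node D ω2 i τ = yq D ω2 P) ∧
  ω1.1 (yq D ω1 P) = ω2.1 (yq D ω2 P)

theorem Inv.symm {P : ℕ} (h : Inv D ω1 ω2 P) : Inv D ω2 ω1 P :=
  ⟨h.1.symm, fun i hi τ hτ => (h.2.1 i hi τ hτ).symm, h.2.2.symm⟩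

theorem node_branch (ω : Om n u v) (i t : ℕ) :
    node D ω i (D.j0 + t) = branchE n u v D.W D.κ ω.1 ω.2 D.j0 (D.g i) t := by
  simp [node]

theorem modRO_eq {κ p j0 W : ℕ} {a : ℕ → Fin v} {y : Bits n} (h : ω1.1 y = ω2.1 y)
    (hb : ∀ t < p, branchE n u v W κ ω1.1 ω1.2 j0 a t = y ↔ branchE n u v W κ ω2.1 ω2.2 j0 a t = y) :
    modRO n u v W κ p ω1.1 ω1.2 j0 a y = modRO n u v W κ p ω2.1 ω2.2 j0 a y := by
  have hb' : (fun t => t < p ∧ branchE n u v W κ ω1.1 ω1.2 j0 a t = y) =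
      (fun t => t < p ∧ branchE n u v W κ ω2.1 ω2.2 j0 a t = y) := by
    funext t
    apply propext
    constructor
    · rintro ⟨a, b⟩; exact ⟨a, (hb t a).1 b⟩
    · rintro ⟨a, b⟩; exact ⟨a, (hb t a).2 b⟩
  unfold modRO
  by_cases h1 : ∃ t, t < p ∧ branchE n u v W κ ω1.1 ω1.2 j0 a t = y
  · have h2 : ∃ t, t < p ∧ branchE n u v W κ ω2.1 ω2.2 j0 a t = y := by
      obtain ⟨t, ht⟩ := h1
      exact ⟨t, (congrFun hb' t).mp ht⟩
    rw [dif_pos h1, dif_pos h2]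
    have : Nat.find h1 = Nat.find h2 := by
      apply le_antisymm
      · exact Nat.find_min' h1 ((congrFun hb' _).mpr (Nat.find_spec h2))
      · exact Nat.find_min' h2 ((congrFun hb' _).mp (Nat.find_spec h1))
    rw [this, h]
  · have h2 : ¬ ∃ t, t < p ∧ branchE n u v W κ ω2.1 ω2.2 j0 a t = y := by
      rintro ⟨t, ht⟩
      exact h1 ⟨t, (congrFun hb' t).mpr ht⟩
    rw [dif_neg h1, dif_neg h2, h]

theorem yq_eq {P : ℕ} (hP : P < D.H * D.q) (ih : ∀ P' < P, Inv D ω1 ω2 P') :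
    yq D ω1 P = yq D ω2 P := by
  have hq : 0 < D.q := by
    rcases Nat.eq_zero_or_pos D.q with h | h
    · rw [h] at hP; omega
    · exact h
  have hiH : P / D.q < D.H := Nat.div_lt_of_lt_mul (by rw [Nat.mul_comm]; exact hP)
  have key : ∀ t ≤ P % D.q,
      advAns n (modRO n u v D.W D.κ D.p ω1.1 ω1.2 D.j0 (D.g (P / D.q))) D.f t =
      advAns n (modRO n u v D.W D.κ D.p ω2.1 ω2.2 D.j0 (D.g (P / D.q))) D.f t := by
    intro t
    induction t with
    | zero => intro _; rfl
    | succ t iht =>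
      intro ht
      have h1 := iht (by omega)
      have hmod : P % D.q < D.q := Nat.mod_lt _ hq
      have hdm := Nat.div_add_mod P D.q
      have hP' : D.q * (P / D.q) + t < P := by omega
      have hd : (D.q * (P / D.q) + t) / D.q = P / D.q := by
        rw [Nat.mul_add_div hq, Nat.div_eq_of_lt (show t < D.q by omega), Nat.add_zero]
      have hm : (D.q * (P / D.q) + t) % D.q = t := by
        rw [Nat.mul_add_mod, Nat.mod_eq_of_lt (by omega)]
      obtain ⟨ey, el, eR⟩ := ih _ hP'
      have y1 : D.f (advAns n (modRO n u v D.W D.κ D.p ω1.1 ω1.2 D.j0 (D.g (P / D.q))) D.f t) =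
          yq D ω1 (D.q * (P / D.q) + t) := by
        simp only [yq, hd, hm, advQ]
      simp only [advAns]
      rw [← h1, y1]
      congr 2
      apply modRO_eq
      · rw [eR, ey]
      · intro t' ht'
        have := el (P / D.q) hiH (D.j0 + t') (by omega)
        rw [node_branch, node_branch] at this
        rw [this, ey]
  unfold yq advQ
  rw [key _ le_rfl]

theorem xknown (h : Sh D ω1 ω2) {P : ℕ} (hP : P < D.H * D.q) (hy : ∀ P' ≤ P, yq D ω1 P' = yq D ω2 P')
    {a : Fin v} (hn : isNode D ω1 (yq D ω1 P)) (hx : xpart D (yq D ω1 P) = ω1.2 a) :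
    ω1.2 a = ω2.2 a := by
  classical
  have hh : ∃ P, isNode D ω1 (yq D ω1 P) ∧ xpart D (yq D ω1 P) = ω1.2 a := ⟨P, hn, hx⟩
  have h0 : Nat.find hh ≤ P := Nat.find_min' hh ⟨hn, hx⟩
  have f1 : factX D ω1 a (Nat.find hh) := ⟨Nat.find_spec hh, fun P' hP' => Nat.find_min hh hP'⟩
  have f2 := (h.fx a _ (by omega)).1 f1
  rw [← f1.1.2, hy _ h0, f2.1.2]

theorem label_dir (h : Sh D ω1 ω2) {P : ℕ} (hP : P < D.H * D.q) (ih : ∀ P' < P, Inv D ω1 ω2 P')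
    (hyP : yq D ω1 P = yq D ω2 P)
    {i τ : ℕ} (hi : i < D.H) (hτ : τ ≤ D.j0 + D.p) (e : node D ω1 i τ = yq D ω1 P) :
    node D ω2 i τ = yq D ω2 P := by
  have hy : ∀ P' ≤ P, yq D ω1 P' = yq D ω2 P' := by
    intro P' hP'
    rcases Nat.lt_or_eq_of_le hP' with h1 | h1
    · exact (ih P' h1).1
    · rw [h1]; exact hyP
  have hX : ω1.2 (ptr D ω1 i τ) = ω2.2 (ptr D ω1 i τ) :=
    xknown h hP hy ⟨i, hi, τ, hτ, e⟩ (by rw [← e, xpart_node])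
  rw [← hyP, ← e]
  cases τ with
  | zero =>
    rw [node_eq, node_eq, hX]
    rfl
  | succ τ =>
    by_cases c1 : ∃ P' < P, ∃ i' < D.H, rs D ω1 i' (τ + 1) = rs D ω1 i (τ + 1) ∧ node D ω1 i' τ = yq D ω1 P'
    · obtain ⟨P', hP', i', hi', ers, en⟩ := c1
      obtain ⟨ey, el, eR⟩ := ih P' hP'
      have en2 := (el i' hi' τ (by omega)).1 en
      have er2 := pat_rs h (by omega) hi' hi ers
      have err : rs D ω1 i' (τ + 1) = rs D ω2 i' (τ + 1) := by
        rw [rs_succ, rs_succ, en, en2]; exact rho_congr eR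
      have ep : ptr D ω1 i (τ + 1) = ptr D ω2 i (τ + 1) := by
        by_cases hl : τ + 1 ≤ D.j0
        · rw [ptr_succ_low D ω1 hl, ptr_succ_low D ω2 hl]
          congr 3
          rw [node_low D ω1 (by omega) i i', node_low D ω2 (by omega) i i', en, en2, eR]
        · rw [ptr_high D ω1 hl, ptr_high D ω2 hl]
      rw [node_eq, node_eq, hX, ← ep, ← er2, ← err, ers]
    · by_cases c2 : ∃ P' < P, ∃ i' < D.H, rs D ω1 i' (τ + 1) = rs D ω1 i (τ + 1) ∧ node D ω1 i' (τ + 1) = yq D ω1 P'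
      · obtain ⟨P', hP', i', hi', ers, en⟩ := c2
        obtain ⟨ey, el, eR⟩ := ih P' hP'
        have en2 := (el i' hi' (τ + 1) (by omega)).1 en
        by_cases hl : τ + 1 ≤ D.j0
        · rw [node_low D ω1 hl i i', node_low D ω2 hl i i', en, en2, ey]
        · have er2 := pat_rs h (by omega) hi' hi ers
          have err : rs D ω1 i' (τ + 1) = rs D ω2 i' (τ + 1) := by
            rw [← rpart_node, ← rpart_node, en, en2, ey]
          have ep : ptr D ω1 i (τ + 1) = ptr D ω2 i (τ + 1) := by
            rw [ptr_high D ω1 hl, ptr_high D ω2 hl]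
          rw [node_eq, node_eq, hX, ← ep, ← er2, ← err, ers]
      · have hc := canonOf_spec D ω1 i (τ + 1)
        have hcl := canonOf_le D ω1 i (τ + 1)
        have hrc : rs D ω1 (canonOf D ω1 i (τ + 1)) (τ + 1) = rs D ω1 i (τ + 1) := by
          rw [← rpart_node, ← rpart_node, hc]
        have f1 : factR D ω1 P (canonOf D ω1 i (τ + 1)) := by
          refine ⟨τ, by omega, hc.trans e, ?_, ?_⟩
          · intro i' hi' e'
            exact canon_canonOf D ω1 i (τ + 1) i' hi' (e'.trans (e.symm.trans hc.symm))
          · intro P' hP' i' hi' ers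
            constructor
            · intro hh; exact c1 ⟨P', hP', i', hi', ers.trans hrc, hh.symm⟩
            · intro hh; exact c2 ⟨P', hP', i', hi', ers.trans hrc, hh.symm⟩
        obtain ⟨τ2, hτ2, en2, -, -⟩ := (h.fr P hP _ (by omega)).1 f1
        have en3 : node D ω2 (canonOf D ω1 i (τ + 1)) (τ2 + 1) = node D ω1 i (τ + 1) := by
          rw [en2, ← hyP, e]
        have := level_node D (by omega) (by omega) en3
        rw [this] at en3
        rw [← pat_node h hτ (by omega) hi hc, en3]

/-- the random part is determined when the string is read -/
theorem rho_known (h : Sh D ω1 ω2) {P : ℕ} (hP : P < D.H * D.q) (ih : ∀ P' < P, Inv D ω1 ω2 P')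
    (hyP : yq D ω1 P = yq D ω2 P) (hz : yq D ω1 P ∈ Zs D ω1) :
    rho D ω1 (yq D ω1 P) = rho D ω2 (yq D ω2 P) := by
  obtain ⟨i, hi, τ, hτ, e, hz⟩ := hz
  have e2 := label_dir h hP ih hyP hi hτ.le e
  have g1 : rho D ω1 (yq D ω1 P) = rs D ω1 i (τ + 1) := by rw [← e]; rfl
  have g2 : rho D ω2 (yq D ω2 P) = rs D ω2 i (τ + 1) := by rw [← e2]; rfl
  rw [g1, g2]
  rcases hz with hz | hz
  · unfold leader at hz
    push Not at hz
    obtain ⟨l, hl, ers, hr⟩ := hz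
    have h1 := rank_le D ω1 hP e.symm
    have h2 : rank D ω1 l τ < P := by omega
    have h3 := rank_lt D ω1 (i := l) (τ := τ) (by omega)
    obtain ⟨ey, el, eR⟩ := ih _ h2
    have h4 := (el l hl τ hτ.le).1 h3.symm
    rw [← ers, ← pat_rs h hτ hl hi ers]
    rw [rs_succ, rs_succ, h4, ← h3]; exact rho_congr eR
  · obtain ⟨P0, hP0, i', hi', hf, en, ers⟩ := hz
    have hlt : P0 < P := by
      obtain ⟨τ', hτ', en', -, hf3⟩ := hf
      have : τ' + 1 = τ + 1 := level_node D (by omega) (by omega) (en'.trans en.symm)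
      obtain rfl : τ' = τ := by omega
      rcases lt_trichotomy P0 P with hl | hl | hl
      · exact hl
      · subst hl
        have := level_node D (by omega) (by omega) (en.trans e.symm)
        omega
      · exact absurd e.symm (hf3 P hl i hi ers.symm).1
    obtain ⟨ey, el, eR⟩ := ih _ hlt
    have h4 := (el i' hi' (τ + 1) (by omega)).1 en
    rw [← ers, ← pat_rs h hτ hi' hi ers, ← rpart_node, ← rpart_node, en, h4, ey]

theorem RO_eq_of (h : Sh D ω1 ω2) {y : Bits n}
    (hz : y ∈ Zs D ω1 ∨ y ∈ Zs D ω2 → rho D ω1 y = rho D ω2 y) : ω1.1 y = ω2.1 y := by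
  obtain ⟨ω', a1, a2⟩ := h.ag
  have hk := D.hκ
  funext b
  by_cases hzz : (y ∈ Zs D ω1 ∨ y ∈ Zs D ω2) ∧ D.κ ≤ (b : ℕ) ∧ (b : ℕ) < D.κ + u
  · have := congrFun (hz hzz.1) ⟨b - D.κ, by omega⟩
    have e : D.κ + (b - D.κ) = b := by omega
    simpa [rho, bitAt, e] using this
  · rcases a1.1 y b with h1 | h1
    · exact absurd ⟨Or.inl h1.1, h1.2⟩ hzz
    · rcases a2.1 y b with h2 | h2
      · exact absurd ⟨Or.inr h2.1, h2.2⟩ hzz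
      · rw [← h1, h2]

theorem inv_all (h : Sh D ω1 ω2) : ∀ P < D.H * D.q, Inv D ω1 ω2 P := by
  intro P
  induction P using Nat.strong_induction_on with
  | _ P ih =>
    intro hP
    have ih' : ∀ P' < P, Inv D ω1 ω2 P' := fun P' hP' => ih P' hP' (by omega)
    have ih2 : ∀ P' < P, Inv D ω2 ω1 P' := fun P' hP' => (ih P' hP' (by omega)).symm
    have hy := yq_eq hP ih'
    refine ⟨hy, fun i hi τ hτ => ⟨label_dir h hP ih' hy hi hτ, label_dir h.symm hP ih2 hy.symm hi hτ⟩, ?_⟩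
    rw [← hy]
    apply RO_eq_of h
    rintro (hz | hz)
    · have := rho_known h hP ih' hy hz
      rwa [← hy] at this
    · rw [hy] at hz
      have := rho_known h.symm hP ih2 hy.symm hz
      rw [← this, hy]

theorem X_eq (h : Sh D ω1 ω2) : ω1.2 = ω2.2 := by
  obtain ⟨ω', a1, a2⟩ := h.ag
  funext a
  have key : (∃ P < D.H * D.q, factX D ω1 a P) → ω1.2 a = ω2.2 a := by
    rintro ⟨P, hP, hf⟩
    exact xknown h hP (fun P' hP' => (inv_all h P' (by omega)).1) hf.1.1 hf.1.2
  rcases a1.2 a with h1 | h1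
  · exact key h1
  · rcases a2.2 a with ⟨P, hP, hf⟩ | h2
    · exact key ⟨P, hP, (h.fx a P hP).2 hf⟩
    · rw [← h1, h2]

/-- if nothing of the class is read, the minimal canonical label is the leader -/
theorem not_erased {ω : Om n u v} {i τ : ℕ} (hτ : τ < D.j0 + D.p) (hi : i < D.H)
    (hu : ∀ P < D.H * D.q, ∀ i' < D.H, rs D ω i' (τ + 1) = rs D ω i (τ + 1) →
      node D ω i' τ ≠ yq D ω P ∧ node D ω i' (τ + 1) ≠ yq D ω P)
    (hmin : ∀ i' < D.H, rs D ω i' (τ + 1) = rs D ω i (τ + 1) → i ≤ i') :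
    node D ω i τ ∉ Zs D ω := by
  rintro ⟨k, hk, τ', hτ', e, hz⟩
  obtain rfl : τ' = τ := level_node D (by omega) (by omega) e
  rcases hz with hz | hz
  · apply hz
    apply leader_congr D ω e.symm
    intro i' hi' ers
    rw [rank_unread D ω (fun P hP e => (hu P hP i hi rfl).1 e.symm),
      rank_unread D ω (fun P hP e => (hu P hP i' hi' ers).1 e.symm)]
    have := hmin (canonOf D ω i' τ') (lt_of_le_of_lt (canonOf_le D ω i' τ') hi')
      ((rs_of_node ω (canonOf_spec D ω i' τ')).trans ers)
    have := canonOf_le D ω i τ'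
    omega
  · obtain ⟨P, hP, i', hi', -, en, ers⟩ := hz
    exact (hu P hP i' hi' (ers.trans (rs_of_node ω e))).2 en

theorem rs_eq_step (h : Sh D ω1 ω2) {τ : ℕ} (hτ : τ < D.j0 + D.p)
    (hn : ∀ i < D.H, node D ω1 i τ = node D ω2 i τ) {i : ℕ} (hi : i < D.H) :
    rs D ω1 i (τ + 1) = rs D ω2 i (τ + 1) := by
  classical
  by_cases c : ∃ P < D.H * D.q, ∃ i' < D.H, rs D ω1 i' (τ + 1) = rs D ω1 i (τ + 1) ∧
      (node D ω1 i' τ = yq D ω1 P ∨ node D ω1 i' (τ + 1) = yq D ω1 P)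
  · obtain ⟨P, hP, i', hi', ers, en⟩ := c
    obtain ⟨ey, el, eR⟩ := inv_all h P hP
    rw [← ers, ← pat_rs h hτ hi' hi ers]
    rcases en with en | en
    · have en2 := (el i' hi' τ (by omega)).1 en
      rw [rs_succ, rs_succ, en, en2]; exact rho_congr eR
    · have en2 := (el i' hi' (τ + 1) (by omega)).1 en
      rw [← rpart_node, ← rpart_node, en, en2, ey]
  · have hh : ∃ k, k < D.H ∧ rs D ω1 k (τ + 1) = rs D ω1 i (τ + 1) := ⟨i, hi, rfl⟩
    obtain ⟨hk, ek⟩ := Nat.find_spec hh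
    have hmin : ∀ i' < D.H, rs D ω1 i' (τ + 1) = rs D ω1 (Nat.find hh) (τ + 1) → Nat.find hh ≤ i' :=
      fun i' hi' e => Nat.find_min' hh ⟨hi', e.trans ek⟩
    have ek2 := pat_rs h hτ hk hi ek
    have z1 : node D ω1 (Nat.find hh) τ ∉ Zs D ω1 := by
      apply not_erased hτ hk _ hmin
      intro P hP i' hi' ers
      constructor
      · intro en; exact c ⟨P, hP, i', hi', ers.trans ek, Or.inl en⟩
      · intro en; exact c ⟨P, hP, i', hi', ers.trans ek, Or.inr en⟩
    have z2 : node D ω2 (Nat.find hh) τ ∉ Zs D ω2 := by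
      apply not_erased hτ hk
      · intro P hP i' hi' ers
        have ers1 := pat_rs h.symm hτ hi' hk ers
        obtain ⟨ey, el, eR⟩ := inv_all h P hP
        constructor
        · intro en; exact c ⟨P, hP, i', hi', ers1.trans ek, Or.inl ((el i' hi' τ (by omega)).2 en)⟩
        · intro en; exact c ⟨P, hP, i', hi', ers1.trans ek, Or.inr ((el i' hi' (τ+1) (by omega)).2 en)⟩
      · intro i' hi' ers
        exact hmin i' hi' (pat_rs h.symm hτ hi' hk ers)
    have hR : ω1.1 (node D ω1 (Nat.find hh) τ) = ω2.1 (node D ω1 (Nat.find hh) τ) := by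
      apply RO_eq_of h
      rintro (hz | hz)
      · exact absurd hz z1
      · rw [hn _ hk] at hz; exact absurd hz z2
    refine ek.symm.trans (Eq.trans ?_ ek2)
    exact (rho_congr hR).trans (congrArg (rho D ω2) (hn _ hk))

theorem RO_eq_of_rs (h : Sh D ω1 ω2) {τ i : ℕ} (hn : node D ω1 i τ = node D ω2 i τ)
    (hr : rs D ω1 i (τ + 1) = rs D ω2 i (τ + 1)) :
    ω1.1 (node D ω1 i τ) = ω2.1 (node D ω1 i τ) := by
  apply RO_eq_of h
  intro _
  simp only [rs] at hr
  rw [hr, hn]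

theorem node_all (h : Sh D ω1 ω2) : ∀ τ ≤ D.j0 + D.p, ∀ i < D.H, node D ω1 i τ = node D ω2 i τ := by
  intro τ
  induction τ with
  | zero =>
    intro _ i _
    rw [node_eq, node_eq, X_eq h]; rfl
  | succ τ ih =>
    intro hτ i hi
    have hn := ih (by omega)
    have hr := rs_eq_step h (by omega) hn hi
    have hR := RO_eq_of_rs h (hn i hi) hr
    have ep : ptr D ω1 i (τ + 1) = ptr D ω2 i (τ + 1) := by
      by_cases hl : τ + 1 ≤ D.j0
      · rw [ptr_succ_low D ω1 hl, ptr_succ_low D ω2 hl]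
        congr 3
        rw [← hn i hi, hR]
      · rw [ptr_high D ω1 hl, ptr_high D ω2 hl]
    rw [node_eq, node_eq, X_eq h, ep, hr]

theorem core (h : Sh D ω1 ω2) : ω1 = ω2 := by
  apply Prod.ext _ (X_eq h)
  funext y
  apply RO_eq_of h
  intro hz
  have : ∃ i < D.H, ∃ τ < D.j0 + D.p, node D ω1 i τ = y := by
    rcases hz with ⟨i, hi, τ, hτ, e, -⟩ | ⟨i, hi, τ, hτ, e, -⟩
    · exact ⟨i, hi, τ, hτ, e⟩
    · exact ⟨i, hi, τ, hτ, by rw [node_all h τ hτ.le i hi, e]⟩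
  obtain ⟨i, hi, τ, hτ, rfl⟩ := this
  have hr := rs_eq_step h hτ (node_all h τ hτ.le) hi
  have := RO_eq_of_rs h (node_all h τ hτ.le i hi) hr
  exact rho_congr this

end core2

section counting
variable {n u v : ℕ} (D : Dat n u v) (ω : Om n u v)

open Classical in
noncomputable def FXs : Finset (Fin v × Fin (D.H * D.q)) :=
  Finset.univ.filter (fun x => factX D ω x.1 x.2)
open Classical in
noncomputable def FRs : Finset (Fin (D.H * D.q) × Fin D.H) :=
  Finset.univ.filter (fun x => factR D ω x.1 x.2)
open Classical in
noncomputable def FCs : Finset (Fin D.p × Fin D.H × Fin D.H) :=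
  Finset.univ.filter (fun x => factC D ω x.1 x.2.1 x.2.2)

open Classical in
noncomputable def Zf : Finset (Bits n) := Finset.univ.filter (fun z => z ∈ Zs D ω)
open Classical in
noncomputable def KX : Finset (Fin v) :=
  Finset.univ.filter (fun a => ∃ P < D.H * D.q, factX D ω a P)

theorem card_FX : (FXs D ω).card ≤ (KX D ω).card := by
  classical
  apply Finset.card_le_card_of_injOn (fun x => x.1)
  · intro x hx
    simp only [FXs, Finset.coe_filter, Finset.mem_univ, true_and, Set.mem_ofPred_eq] at hx
    simp only [KX, Finset.coe_filter, Finset.mem_univ, true_and, Set.mem_ofPred_eq]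
    exact ⟨x.2, x.2.2, hx⟩
  · rintro ⟨a, P⟩ hx ⟨a', P'⟩ hx' e
    simp only [FXs, Finset.coe_filter, Finset.mem_univ, true_and, Set.mem_ofPred_eq] at hx hx' e
    subst e
    congr 1
    apply Fin.ext
    rcases lt_trichotomy (P : ℕ) P' with h | h | h
    · exact absurd hx.1 (hx'.2 _ h)
    · exact h
    · exact absurd hx'.1 (hx.2 _ h)

theorem card_Z : (FRs D ω).card + (FCs D ω).card ≤ (Zf D ω).card := by
  classical
  rw [← Finset.card_filter_add_card_filter_not (s := Zf D ω)
    (fun z => ∃ i < D.H, ∃ τ < D.j0 + D.p, node D ω i τ = z ∧ leader D ω i τ)]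
  apply Nat.add_le_add
  · have hex : ∀ x : Fin (D.H * D.q) × Fin D.H, ∃ z : Bits n, factR D ω x.1 x.2 →
        ∃ τ < D.j0 + D.p, ∃ l < D.H, node D ω l τ = z ∧ leader D ω l τ ∧
          node D ω x.2 (τ + 1) = yq D ω x.1 ∧ rs D ω l (τ + 1) = rs D ω x.2 (τ + 1) := by
      intro x
      by_cases hf : factR D ω x.1 x.2
      · obtain ⟨τ, hτ, en, -, -⟩ := hf
        obtain ⟨l, hl, el, ll, -⟩ := exists_leader D ω (τ := τ) x.2.2
        exact ⟨node D ω l τ, fun _ => ⟨τ, hτ, l, hl, rfl, ll, en, el⟩⟩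
      · exact ⟨fun _ => false, fun h => absurd h hf⟩
    choose φ hφ using hex
    apply Finset.card_le_card_of_injOn φ
    · intro x hx
      simp only [FRs, Finset.coe_filter, Finset.mem_univ, true_and, Set.mem_ofPred_eq] at hx
      obtain ⟨τ, hτ, l, hl, ez, ll, en, el⟩ := hφ x hx
      simp only [Zf, Finset.coe_filter, Finset.mem_filter, Finset.mem_univ, true_and, Set.mem_ofPred_eq]
      exact ⟨⟨l, hl, τ, hτ, ez, Or.inr ⟨x.1, x.1.2, x.2, x.2.2, hx, en, el.symm⟩⟩, l, hl, τ, hτ, ez, ll⟩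
    · intro x hx x' hx' e
      simp only [FRs, Finset.coe_filter, Finset.mem_univ, true_and, Set.mem_ofPred_eq] at hx hx'
      obtain ⟨τ, hτ, l, hl, ez, ll, en, el⟩ := hφ x hx
      obtain ⟨τ', hτ', l', hl', ez', ll', en', el'⟩ := hφ x' hx'
      have enn : node D ω l τ = node D ω l' τ' := by rw [ez, ez', e]
      obtain rfl : τ = τ' := level_node D hτ.le hτ'.le enn
      have er : rs D ω x.2 (τ + 1) = rs D ω x'.2 (τ + 1) := by
        rw [← el, ← el']; exact rs_of_node ω enn
      obtain ⟨σ, hσ, a1, a2, a3⟩ := hx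
      obtain ⟨σ', hσ', b1, b2, b3⟩ := hx'
      have s1 : σ + 1 = τ + 1 := level_node D (by omega) (by omega) (a1.trans en.symm)
      have s2 : σ' + 1 = τ + 1 := level_node D (by omega) (by omega) (b1.trans en'.symm)
      obtain rfl : σ = τ := by omega
      obtain rfl : σ' = σ := by omega
      have hPP : x.1 = x'.1 := by
        apply Fin.ext
        rcases lt_trichotomy (x.1 : ℕ) x'.1 with h | h | h
        · exact absurd a1.symm (b3 _ h x.2 x.2.2 er).2
        · exact h
        · exact absurd b1.symm (a3 _ h x'.2 x'.2.2 er.symm).2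
      have hii : x.2 = x'.2 := by
        apply Fin.ext
        rcases lt_trichotomy (x.2 : ℕ) x'.2 with h | h | h
        · exact absurd (a1.trans (by rw [hPP])) (b2 _ h)
        · exact h
        · exact absurd (b1.trans (by rw [hPP])) (a2 _ h)
      exact Prod.ext hPP hii
  · apply Finset.card_le_card_of_injOn (fun x => node D ω x.2.1 (D.j0 + x.1))
    · rintro ⟨c, i, l⟩ hx
      simp only [FCs, Finset.coe_filter, Finset.mem_univ, true_and, Set.mem_ofPred_eq] at hx
      obtain ⟨h1, h2, h3, h4, h5⟩ := hx
      have hc := c.2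
      simp only [Zf, Finset.coe_filter, Finset.mem_filter, Finset.mem_univ, true_and, Set.mem_ofPred_eq]
      refine ⟨⟨i, i.2, D.j0 + c, by omega, rfl, Or.inl h3⟩, ?_⟩
      rintro ⟨i', hi', τ, hτ, e, hl⟩
      obtain rfl : τ = D.j0 + c := level_node D hτ.le (by omega) e
      exact h3 (leader_congr D ω e hl)
    · rintro ⟨c, i, l⟩ hx ⟨c', i', l'⟩ hx' e
      simp only [FCs, Finset.coe_filter, Finset.mem_univ, true_and, Set.mem_ofPred_eq] at hx hx' e
      have hc := c.2
      have hc' := c'.2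
      have hcc : D.j0 + (c : ℕ) = D.j0 + c' := level_node D (by omega) (by omega) e
      obtain rfl : c = c' := Fin.ext (by omega)
      obtain ⟨h1, h2, h3, h4, h5⟩ := hx
      obtain ⟨g1, g2, g3, g4, g5⟩ := hx'
      obtain rfl : i = i' := Fin.ext (canon_eq D ω h1 g1 e)
      have := leader_unique D ω l.2 l'.2 h4 g4 (h5.symm.trans g5)
      obtain rfl : l = l' := Fin.ext (canon_eq D ω h2 g2 this)
      rfl

open Classical in
noncomputable def Ag : Finset (Om n u v) := Finset.univ.filter (fun ω' => agree D ω ω')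

open Classical in
/-- overwrite the erased parts -/
noncomputable def overw (α : {z // z ∈ Zf D ω} → Bits u) (β : {a // a ∈ KX D ω} → Bits u) : Om n u v :=
  (fun y b => if h : y ∈ Zf D ω ∧ D.κ ≤ (b : ℕ) ∧ (b : ℕ) < D.κ + u then
      α ⟨y, h.1⟩ ⟨b - D.κ, by omega⟩ else ω.1 y b,
   fun a => if h : a ∈ KX D ω then β ⟨a, h⟩ else ω.2 a)

theorem card_Ag : 2 ^ (u * ((Zf D ω).card + (KX D ω).card)) ≤ (Ag D ω).card := by
  classical
  have hk := D.hκ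
  have h1 : Fintype.card (({z // z ∈ Zf D ω} → Bits u) × ({a // a ∈ KX D ω} → Bits u)) =
      2 ^ (u * ((Zf D ω).card + (KX D ω).card)) := by
    simp only [Fintype.card_prod, Fintype.card_fun, Fintype.card_bool, Fintype.card_fin,
      Fintype.card_coe]
    rw [← pow_mul, ← pow_mul, ← pow_add, mul_add]
  rw [← h1, ← Finset.card_univ]
  apply Finset.card_le_card_of_injOn (fun x => overw D ω x.1 x.2)
  · rintro ⟨α, β⟩ -
    simp only [Ag, Finset.coe_filter, Finset.mem_univ, true_and, Set.mem_ofPred_eq]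
    constructor
    · intro y b
      by_cases h : y ∈ Zf D ω ∧ D.κ ≤ (b : ℕ) ∧ (b : ℕ) < D.κ + u
      · left
        exact ⟨by simpa [Zf] using h.1, h.2⟩
      · right
        simp only [overw, dif_neg h]
    · intro a
      by_cases h : a ∈ KX D ω
      · left; simpa [KX] using h
      · right; simp only [overw, dif_neg h]
  · rintro ⟨α, β⟩ - ⟨α', β'⟩ - e
    simp only at e
    have e1 := congrArg Prod.fst e
    have e2 := congrArg Prod.snd e
    apply Prod.ext
    · funext ⟨z, hz⟩ t
      have ht := t.2
      have := congrFun (congrFun e1 z) ⟨D.κ + t, by omega⟩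
      have hc : z ∈ Zf D ω ∧ D.κ ≤ D.κ + (t : ℕ) ∧ D.κ + (t : ℕ) < D.κ + u := ⟨hz, by omega, by omega⟩
      simpa [overw, hz] using this
    · funext ⟨a, ha⟩
      have := congrFun e2 a
      simpa [overw, ha] using this

open Classical in
noncomputable def Sset (FX : Finset (Fin v × Fin (D.H * D.q))) (FR : Finset (Fin (D.H * D.q) × Fin D.H))
    (FC : Finset (Fin D.p × Fin D.H × Fin D.H)) : Finset (Om n u v) :=
  Finset.univ.filter (fun ω => Function.Injective ω.2 ∧ FXs D ω = FX ∧ FRs D ω = FR ∧ FCs D ω = FC)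

theorem card_Sset (FX : Finset (Fin v × Fin (D.H * D.q))) (FR : Finset (Fin (D.H * D.q) × Fin D.H))
    (FC : Finset (Fin D.p × Fin D.H × Fin D.H)) :
    (Sset D FX FR FC).card * 2 ^ (u * (FX.card + FR.card + FC.card)) ≤ Fintype.card (Om n u v) := by
  classical
  have hd : ∀ x ∈ Sset D FX FR FC, ∀ y ∈ Sset D FX FR FC, x ≠ y → Disjoint (Ag D x) (Ag D y) := by
    intro x hx y hy hne
    rw [Finset.disjoint_left]
    intro ω' h1 h2
    apply hne
    simp only [Sset, Finset.mem_filter, Finset.mem_univ, true_and] at hx hy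
    simp only [Ag, Finset.mem_filter, Finset.mem_univ, true_and] at h1 h2
    obtain ⟨x1, x2, x3, x4⟩ := hx
    obtain ⟨y1, y2, y3, y4⟩ := hy
    apply core (D := D)
    refine ⟨x1, y1, ?_, ?_, ?_, ω', h1, h2⟩
    · intro a P hP
      have : ((a, ⟨P, hP⟩) : Fin v × Fin (D.H * D.q)) ∈ FXs D x ↔ (a, ⟨P, hP⟩) ∈ FXs D y := by
        rw [x2, y2]
      simpa [FXs] using this
    · intro P hP i hi
      have : ((⟨P, hP⟩, ⟨i, hi⟩) : Fin (D.H * D.q) × Fin D.H) ∈ FRs D x ↔ (⟨P, hP⟩, ⟨i, hi⟩) ∈ FRs D y := by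
        rw [x3, y3]
      simpa [FRs] using this
    · intro c hc i hi l hl
      have : ((⟨c, hc⟩, ⟨i, hi⟩, ⟨l, hl⟩) : Fin D.p × Fin D.H × Fin D.H) ∈ FCs D x ↔
          (⟨c, hc⟩, ⟨i, hi⟩, ⟨l, hl⟩) ∈ FCs D y := by
        rw [x4, y4]
      simpa [FCs] using this
  calc (Sset D FX FR FC).card * 2 ^ (u * (FX.card + FR.card + FC.card))
      = ∑ x ∈ Sset D FX FR FC, 2 ^ (u * (FX.card + FR.card + FC.card)) := by
        rw [Finset.sum_const, smul_eq_mul]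
    _ ≤ ∑ x ∈ Sset D FX FR FC, (Ag D x).card := by
        apply Finset.sum_le_sum
        intro x hx
        refine le_trans (Nat.pow_le_pow_right (by norm_num) (Nat.mul_le_mul_left _ ?_)) (card_Ag D x)
        simp only [Sset, Finset.mem_filter, Finset.mem_univ, true_and] at hx
        obtain ⟨x1, x2, x3, x4⟩ := hx
        have a := card_FX D x
        have b := card_Z D x
        rw [x2] at a; rw [x3, x4] at b
        omega
    _ = ((Sset D FX FR FC).biUnion (Ag D)).card := (Finset.card_biUnion hd).symm
    _ ≤ Fintype.card (Om n u v) := Finset.card_le_univ _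

end counting

section sums

theorem sum_pow_card {α : Type*} [Fintype α] (t : ℝ) :
    ∑ S : Finset α, t ^ S.card = (1 + t) ^ Fintype.card α := by
  classical
  have := Fintype.sum_pow_mul_eq_add_pow α t 1
  simpa [add_comm] using this

theorem sum_pow_card_le {α : Type*} [Fintype α] (t : ℝ) (ht : 0 ≤ t)
    (h : (Fintype.card α : ℝ) * t ≤ 1) : ∑ S : Finset α, t ^ S.card ≤ Real.exp 1 := by
  rw [sum_pow_card]
  calc (1 + t) ^ Fintype.card α ≤ (Real.exp t) ^ Fintype.card α := by
        apply pow_le_pow_left₀ (by linarith)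
        linarith [Real.add_one_le_exp t]
    _ = Real.exp (Fintype.card α * t) := by rw [← Real.exp_nat_mul]
    _ ≤ Real.exp 1 := Real.exp_le_exp.2 h

open Classical in
theorem rankin {α : Type*} [Fintype α] (t : ℝ) (ht : 0 < t) (H : ℕ) (hU : 0 < Fintype.card α)
    (h : (Fintype.card α : ℝ) * t ≤ 1) :
    ∑ S ∈ (Finset.univ : Finset (Finset α)).filter (fun S => H ≤ S.card), t ^ S.card ≤
      (Fintype.card α * t) ^ H * Real.exp 1 := by
  have hU' : (0 : ℝ) < Fintype.card α := by exact_mod_cast hU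
  set U : ℝ := (Fintype.card α : ℝ) with hUdef
  have hb : 0 < U * t := by positivity
  calc ∑ S ∈ (Finset.univ : Finset (Finset α)).filter (fun S => H ≤ S.card), t ^ S.card
      ≤ ∑ S ∈ (Finset.univ : Finset (Finset α)).filter (fun S => H ≤ S.card),
          (U * t) ^ H * (1 / U) ^ S.card := by
        apply Finset.sum_le_sum
        intro S hS
        have hS' : H ≤ S.card := (Finset.mem_filter.1 hS).2
        have e : t ^ S.card = (U * t) ^ S.card * (1 / U) ^ S.card := by
          rw [← mul_pow]; congr 1; field_simp
        rw [e]
        apply mul_le_mul_of_nonneg_right _ (by positivity)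
        exact pow_le_pow_of_le_one hb.le h hS'
    _ ≤ ∑ S : Finset α, (U * t) ^ H * (1 / U) ^ S.card := by
        apply Finset.sum_le_sum_of_subset_of_nonneg (Finset.filter_subset _ _)
        intros; positivity
    _ = (U * t) ^ H * ∑ S : Finset α, (1 / U) ^ S.card := by rw [Finset.mul_sum]
    _ ≤ (U * t) ^ H * Real.exp 1 := by
        apply mul_le_mul_of_nonneg_left _ (by positivity)
        apply sum_pow_card_le _ (by positivity)
        rw [← hUdef]
        field_simp
        exact le_refl _

end sums

section bound
variable {n u v : ℕ} (D : Dat n u v)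

open Classical in
noncomputable def Tset : Finset (Om n u v) :=
  Finset.univ.filter (fun ω => Function.Injective ω.2 ∧ D.H ≤ (FXs D ω).card)

theorem card_Tset (hH : 1 ≤ D.H) (hHv : D.H ≤ v) (hq : 1 ≤ D.q) (hv2 : 2 ≤ v) (θ : ℝ) (hθ : θ = ((2 : ℝ) ^ u)⁻¹)
    (hR : (v : ℝ) ^ (D.p + 2) * D.q * θ ≤ 1) :
    ((Tset D).card : ℝ) ≤ Fintype.card (Om n u v) * (((v : ℝ) ^ 2 * D.q * θ) ^ D.H * Real.exp 1 ^ 3) := by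
  classical
  have hθ0 : 0 < θ := by rw [hθ]; positivity
  set N : ℝ := (Fintype.card (Om n u v) : ℝ) with hN
  have hN0 : 0 ≤ N := by rw [hN]; positivity
  have hv1 : (1 : ℝ) ≤ v := by exact_mod_cast D.hv
  have hq1 : (1 : ℝ) ≤ D.q := by exact_mod_cast hq
  have hHv' : (D.H : ℝ) ≤ v := by exact_mod_cast hHv
  have hvp : (1 : ℝ) ≤ (v : ℝ) ^ D.p := one_le_pow₀ hv1
  -- the numerical facts
  have n1 : (v : ℝ) ^ 2 * D.q * θ ≤ 1 := by
    refine le_trans ?_ hR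
    rw [pow_add]
    have : (0 : ℝ) ≤ (v : ℝ) ^ 2 * D.q * θ := by positivity
    nlinarith
  have n2 : (D.p : ℝ) * v ^ 2 * θ ≤ 1 := by
    refine le_trans ?_ hR
    have h1 : (D.p : ℝ) ≤ (v : ℝ) ^ D.p := by
      have : D.p < v ^ D.p := Nat.lt_pow_self (by omega)
      exact_mod_cast this.le
    rw [pow_add]
    have e1 : (D.p : ℝ) * v ^ 2 ≤ (v : ℝ) ^ D.p * v ^ 2 :=
      mul_le_mul_of_nonneg_right h1 (by positivity)
    have e2 : (v : ℝ) ^ D.p * v ^ 2 ≤ (v : ℝ) ^ D.p * v ^ 2 * D.q :=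
      le_mul_of_one_le_right (by positivity) hq1
    exact mul_le_mul_of_nonneg_right (e1.trans e2) hθ0.le
  have hFX : ∑ S ∈ (Finset.univ : Finset (Finset (Fin v × Fin (D.H * D.q)))).filter
      (fun S => D.H ≤ S.card), θ ^ S.card ≤ ((v : ℝ) ^ 2 * D.q * θ) ^ D.H * Real.exp 1 := by
    have hc : (Fintype.card (Fin v × Fin (D.H * D.q)) : ℝ) = v * (D.H * D.q) := by simp
    have hle : (Fintype.card (Fin v × Fin (D.H * D.q)) : ℝ) * θ ≤ (v : ℝ) ^ 2 * D.q * θ := by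
      rw [hc]
      apply mul_le_mul_of_nonneg_right _ hθ0.le
      have : (v : ℝ) * (D.H * D.q) ≤ v * (v * D.q) := by gcongr
      linarith [this, sq (v : ℝ)]
    refine (rankin θ hθ0 D.H ?_ (hle.trans n1)).trans ?_
    · simp only [Fintype.card_prod, Fintype.card_fin]
      have := D.hv
      positivity
    · apply mul_le_mul_of_nonneg_right _ (Real.exp_pos 1).le
      exact pow_le_pow_left₀ (by positivity) hle _
  have hFR : ∑ S : Finset (Fin (D.H * D.q) × Fin D.H), θ ^ S.card ≤ Real.exp 1 := by
    apply sum_pow_card_le θ hθ0.le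
    refine le_trans ?_ n1
    apply mul_le_mul_of_nonneg_right _ hθ0.le
    simp only [Fintype.card_prod, Fintype.card_fin]
    push_cast
    have : (D.H : ℝ) * D.q * D.H ≤ v * D.q * v := by gcongr
    linarith [this, sq (v : ℝ)]
  have hFC : ∑ S : Finset (Fin D.p × Fin D.H × Fin D.H), θ ^ S.card ≤ Real.exp 1 := by
    apply sum_pow_card_le θ hθ0.le
    refine le_trans ?_ n2
    apply mul_le_mul_of_nonneg_right _ hθ0.le
    simp only [Fintype.card_prod, Fintype.card_fin]
    push_cast
    have : (D.p : ℝ) * (D.H * D.H) ≤ D.p * (v * v) := by gcongr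
    linarith [this, sq (v : ℝ)]
  -- decomposition
  set I := (((Finset.univ : Finset (Finset (Fin v × Fin (D.H * D.q)))).filter
      (fun S => D.H ≤ S.card)) ×ˢ ((Finset.univ : Finset (Finset (Fin (D.H * D.q) × Fin D.H))) ×ˢ
      (Finset.univ : Finset (Finset (Fin D.p × Fin D.H × Fin D.H))))) with hI
  have hsub : Tset D ⊆ I.biUnion (fun x => Sset D x.1 x.2.1 x.2.2) := by
    intro ω hω
    simp only [Tset, Finset.mem_filter, Finset.mem_univ, true_and] at hω
    rw [Finset.mem_biUnion]
    refine ⟨(FXs D ω, FRs D ω, FCs D ω), ?_, ?_⟩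
    · simp [hI, hω.2]
    · simp [Sset, hω.1]
  have hS : ∀ x : Finset (Fin v × Fin (D.H * D.q)) × Finset (Fin (D.H * D.q) × Fin D.H) ×
      Finset (Fin D.p × Fin D.H × Fin D.H),
      ((Sset D x.1 x.2.1 x.2.2).card : ℝ) ≤ N * (θ ^ x.1.card * (θ ^ x.2.1.card * θ ^ x.2.2.card)) := by
    intro x
    have := card_Sset D x.1 x.2.1 x.2.2
    have h2 : ((Sset D x.1 x.2.1 x.2.2).card : ℝ) * 2 ^ (u * (x.1.card + x.2.1.card + x.2.2.card)) ≤ N := by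
      rw [hN]; exact_mod_cast this
    rw [← pow_add, ← pow_add, hθ, inv_pow, ← pow_mul, ← add_assoc, ← div_eq_mul_inv,
      le_div_iff₀ (by positivity)]
    exact h2
  calc ((Tset D).card : ℝ) ≤ ((I.biUnion (fun x => Sset D x.1 x.2.1 x.2.2)).card : ℝ) := by
        exact_mod_cast Finset.card_le_card hsub
    _ ≤ ∑ x ∈ I, ((Sset D x.1 x.2.1 x.2.2).card : ℝ) := by
        exact_mod_cast Finset.card_biUnion_le
    _ ≤ ∑ x ∈ I, N * (θ ^ x.1.card * (θ ^ x.2.1.card * θ ^ x.2.2.card)) :=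
        Finset.sum_le_sum (fun x _ => hS x)
    _ = N * ((∑ S ∈ (Finset.univ : Finset (Finset (Fin v × Fin (D.H * D.q)))).filter
          (fun S => D.H ≤ S.card), θ ^ S.card) *
          ((∑ S : Finset (Fin (D.H * D.q) × Fin D.H), θ ^ S.card) *
           (∑ S : Finset (Fin D.p × Fin D.H × Fin D.H), θ ^ S.card))) := by
        rw [← Finset.mul_sum, hI, Finset.sum_product, Finset.sum_mul]
        congr 1
        apply Finset.sum_congr rfl
        intro a _
        dsimp only
        rw [← Finset.mul_sum, Finset.sum_product, Finset.sum_mul]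
        congr 1
        apply Finset.sum_congr rfl
        intro b _
        dsimp only
        rw [← Finset.mul_sum]
    _ ≤ N * ((((v : ℝ) ^ 2 * D.q * θ) ^ D.H * Real.exp 1) * (Real.exp 1 * Real.exp 1)) := by
        apply mul_le_mul_of_nonneg_left _ hN0
        have p1 : 0 ≤ ∑ S : Finset (Fin (D.H * D.q) × Fin D.H), θ ^ S.card :=
          Finset.sum_nonneg (fun _ _ => by positivity)
        have p2 : 0 ≤ ∑ S : Finset (Fin D.p × Fin D.H × Fin D.H), θ ^ S.card :=
          Finset.sum_nonneg (fun _ _ => by positivity)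
        gcongr
    _ = _ := by ring

end bound

section coll
variable (n u v : ℕ)

open Classical in
noncomputable def Coll : Finset (Om n u v) := Finset.univ.filter (fun ω => ¬ Function.Injective ω.2)

variable {n u v}
open Classical in
theorem card_pair {a b : Fin v} (hab : a ≠ b) :
    ((Finset.univ : Finset (Om n u v)).filter (fun ω => ω.2 a = ω.2 b)).card * 2 ^ u ≤
      Fintype.card (Om n u v) := by
  have h1 : Fintype.card (Bits u) = 2 ^ u := by simp
  rw [← h1, ← Finset.card_univ (α := Bits u), ← Finset.card_product, ← Finset.card_univ (α := Om n u v)]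
  apply Finset.card_le_card_of_injOn (fun x => (x.1.1, Function.update x.1.2 a x.2))
  · intro x _; simp
  · rintro ⟨⟨R, X⟩, d⟩ hx ⟨⟨R', X'⟩, d'⟩ hx' e
    simp only [Finset.coe_product, Finset.coe_filter, Finset.mem_univ, true_and, Set.mem_prod,
      Set.mem_ofPred_eq, Finset.coe_univ, Set.mem_univ, and_true] at hx hx'
    simp only [Prod.mk.injEq] at e
    obtain ⟨e1, e2⟩ := e
    have hd : d = d' := by
      have := congrFun e2 a
      simpa using this
    have ho : ∀ c, c ≠ a → X c = X' c := by
      intro c hc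
      have := congrFun e2 c
      simpa [Function.update_of_ne hc] using this
    have hX : X = X' := by
      funext c
      by_cases hc : c = a
      · rw [hc, hx, hx', ho b hab.symm]
      · exact ho c hc
    rw [e1, hX, hd]

theorem card_Coll : ((Coll n u v).card : ℝ) ≤
    Fintype.card (Om n u v) * ((v : ℝ) ^ 2 * ((2 : ℝ) ^ u)⁻¹) := by
  classical
  have hsub : Coll n u v ⊆ ((Finset.univ : Finset (Fin v × Fin v)).filter (fun x => x.1 ≠ x.2)).biUnion
      (fun x => (Finset.univ : Finset (Om n u v)).filter (fun ω => ω.2 x.1 = ω.2 x.2)) := by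
    intro ω hω
    have hω := (Finset.mem_filter.1 hω).2
    unfold Function.Injective at hω
    push Not at hω
    obtain ⟨a, b, e, hne⟩ := hω
    rw [Finset.mem_biUnion]
    exact ⟨(a, b), by simp [hne], by simp [e]⟩
  calc ((Coll n u v).card : ℝ) ≤ ((((Finset.univ : Finset (Fin v × Fin v)).filter (fun x => x.1 ≠ x.2)).biUnion
      (fun x => (Finset.univ : Finset (Om n u v)).filter (fun ω => ω.2 x.1 = ω.2 x.2))).card : ℝ) := by
        exact_mod_cast Finset.card_le_card hsub
    _ ≤ ∑ x ∈ (Finset.univ : Finset (Fin v × Fin v)).filter (fun x => x.1 ≠ x.2),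
        (((Finset.univ : Finset (Om n u v)).filter (fun ω => ω.2 x.1 = ω.2 x.2)).card : ℝ) := by
        exact_mod_cast Finset.card_biUnion_le
    _ ≤ ∑ x ∈ (Finset.univ : Finset (Fin v × Fin v)).filter (fun x => x.1 ≠ x.2),
        (Fintype.card (Om n u v) : ℝ) * ((2 : ℝ) ^ u)⁻¹ := by
        apply Finset.sum_le_sum
        intro x hx
        have := card_pair (n := n) (u := u) (Finset.mem_filter.1 hx).2
        rw [← div_eq_mul_inv, le_div_iff₀ (by positivity)]
        exact_mod_cast this
    _ ≤ ∑ x : Fin v × Fin v, (Fintype.card (Om n u v) : ℝ) * ((2 : ℝ) ^ u)⁻¹ := by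
        apply Finset.sum_le_sum_of_subset_of_nonneg (Finset.filter_subset _ _)
        intros; positivity
    _ = _ := by
        rw [Finset.sum_const, Finset.card_univ]
        simp only [Fintype.card_prod, Fintype.card_fin, nsmul_eq_mul]
        push_cast
        ring

end coll

section member
variable {n u v : ℕ}

theorem branchE_congr {W κ : ℕ} {RO : Bits n → Bits n} {X : Fin v → Bits u} {j : ℕ} {a a' : ℕ → Fin v} :
    ∀ c, (∀ d, 1 ≤ d → d ≤ c → a d = a' d) →
      branchE n u v W κ RO X j a c = branchE n u v W κ RO X j a' c := by
  intro c
  induction c with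
  | zero => intro _; rfl
  | succ c ih =>
    intro h
    simp only [branchE]
    rw [ih (fun d h1 h2 => h d h1 (by omega)), h (c + 1) (by omega) (by omega)]

theorem modRO_congr {W κ p : ℕ} {RO : Bits n → Bits n} {X : Fin v → Bits u} {j : ℕ} {a a' : ℕ → Fin v}
    (h : ∀ d, 1 ≤ d → d ≤ p → a d = a' d) :
    modRO n u v W κ p RO X j a = modRO n u v W κ p RO X j a' := by
  classical
  funext y
  have hb : ∀ t, (t < p ∧ branchE n u v W κ RO X j a t = y) ↔
      (t < p ∧ branchE n u v W κ RO X j a' t = y) := by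
    intro t
    constructor
    · rintro ⟨h1, h2⟩
      exact ⟨h1, by rw [← branchE_congr t (fun d a b => h d a (by omega))]; exact h2⟩
    · rintro ⟨h1, h2⟩
      exact ⟨h1, by rw [branchE_congr t (fun d a b => h d a (by omega))]; exact h2⟩
  unfold modRO
  by_cases h1 : ∃ t, t < p ∧ branchE n u v W κ RO X j a t = y
  · have h2 : ∃ t, t < p ∧ branchE n u v W κ RO X j a' t = y := by
      obtain ⟨t, ht⟩ := h1
      exact ⟨t, (hb t).1 ht⟩
    rw [dif_pos h1, dif_pos h2]
    have e : Nat.find h1 = Nat.find h2 := by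
      apply le_antisymm
      · exact Nat.find_min' h1 ((hb _).2 (Nat.find_spec h2))
      · exact Nat.find_min' h2 ((hb _).1 (Nat.find_spec h1))
    have hlt := (Nat.find_spec h2).1
    rw [e, h _ (by omega) (by omega)]
  · have h2 : ¬ ∃ t, t < p ∧ branchE n u v W κ RO X j a' t = y := by
      rintro ⟨t, ht⟩
      exact h1 ⟨t, (hb t).2 ht⟩
    rw [dif_neg h1, dif_neg h2]

/-- enough hits give enough facts -/
theorem many_facts (D : Dat n u v) (ω : Om n u v) (hinj : Function.Injective ω.2)
    (a : Fin D.H → Fin v) (ha : Function.Injective a)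
    (hit : ∀ i : Fin D.H, ∃ b, 1 ≤ b ∧ b ≤ D.p ∧ D.g i b = a i ∧ ∃ t < D.q,
      advQ n (modRO n u v D.W D.κ D.p ω.1 ω.2 D.j0 (D.g i)) D.f t =
        branchE n u v D.W D.κ ω.1 ω.2 D.j0 (D.g i) b) :
    D.H ≤ (FXs D ω).card := by
  classical
  have hex : ∀ i : Fin D.H, ∃ P : Fin (D.H * D.q), factX D ω (a i) P := by
    intro i
    obtain ⟨b, hb1, hbp, hg, t, ht, e⟩ := hit i
    have hi := i.2
    have hd : (D.q * i + t) / D.q = i := by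
      rw [Nat.mul_add_div (by omega), Nat.div_eq_of_lt ht, Nat.add_zero]
    have hm : (D.q * i + t) % D.q = t := by
      rw [Nat.mul_add_mod, Nat.mod_eq_of_lt ht]
    have hlt : D.q * i + t < D.H * D.q := by
      calc D.q * i + t < D.q * i + D.q := by omega
        _ = D.q * (i + 1) := by ring
        _ ≤ D.q * D.H := Nat.mul_le_mul_left _ hi
        _ = D.H * D.q := Nat.mul_comm _ _
    have hy : yq D ω (D.q * i + t) = node D ω i (D.j0 + b) := by
      rw [node_branch]; simp only [yq, hd, hm]; exact e
    have hpt : ptr D ω i (D.j0 + b) = a i := by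
      rw [ptr_high D ω (by omega), Nat.add_sub_cancel_left, hg]
    have hh : ∃ P, isNode D ω (yq D ω P) ∧ xpart D (yq D ω P) = ω.2 (a i) := by
      refine ⟨_, ⟨i, hi, D.j0 + b, by omega, hy.symm⟩, ?_⟩
      rw [hy, xpart_node, hpt]
    have hle : Nat.find hh ≤ D.q * i + t := by
      apply Nat.find_min'
      refine ⟨⟨i, hi, D.j0 + b, by omega, hy.symm⟩, ?_⟩
      rw [hy, xpart_node, hpt]
    exact ⟨⟨Nat.find hh, by omega⟩, Nat.find_spec hh, fun P' hP' => Nat.find_min hh hP'⟩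
  choose P hP using hex
  have : (Finset.univ : Finset (Fin D.H)).card ≤ (FXs D ω).card := by
    apply Finset.card_le_card_of_injOn (fun i => (a i, P i))
    · intro i _
      simp only [FXs, Finset.coe_filter, Finset.mem_univ, true_and, Set.mem_ofPred_eq]
      exact hP i
    · intro i _ i' _ e
      exact ha (congrArg Prod.fst e)
  simpa using this

theorem jk_le {W κ w s q m : ℕ} (hw : 1 ≤ w) (A : MPC n s q m (Fin v → Bits u))
    (RO : Bits n → Bits n) (X : Fin v → Bits u) (k : ℕ) :
    jkIdx n u v W κ w s q m A RO X k - 1 < w := by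
  have : jkIdx n u v W κ w s q m A RO X k ≤ w := by
    unfold jkIdx
    apply max_le _ hw
    apply csSup_le'
    rintro j ⟨_, h, _⟩
    exact h
  omega

/-- extension of a finite table of pointers -/
def gext (hv : 0 < v) {H p : ℕ} (g : Fin H → Fin p → Fin v) (i c : ℕ) : Fin v :=
  if h : i < H ∧ 1 ≤ c ∧ c ≤ p then g ⟨i, h.1⟩ ⟨c - 1, by omega⟩ else ⟨0, hv⟩

end member

section union
variable {n u v : ℕ}

/-- the data for given choices -/
def mkD (W κ p q H : ℕ) (hn : W + 2 * u ≤ n) (hκ : κ + u ≤ n) (hv : 0 < v) (j0 : ℕ)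
    (hW : j0 + p + 1 < 2 ^ W) (f : List (Bits n) → Bits n) (g : Fin H → Fin p → Fin v) : Dat n u v where
  W := W
  κ := κ
  p := p
  q := q
  H := H
  j0 := j0
  g := gext hv g
  f := f
  hn := hn
  hκ := hκ
  hW := hW
  hv := hv

theorem event_bound {W κ p w s q m H : ℕ} (hn : W + 2 * u ≤ n) (hκ : κ + u ≤ n) (hv : 2 ≤ v)
    (hw : 1 ≤ w) (hq : 1 ≤ q) (hH : 1 ≤ H) (hHv : H ≤ v) (hW : w + p + 2 ≤ 2 ^ W)
    (θ : ℝ) (hθ : θ = ((2 : ℝ) ^ u)⁻¹) (hR : (v : ℝ) ^ (p + 2) * q * θ ≤ 1)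
    (A : MPC n s q m (Fin v → Bits u)) (i : Fin m) (k : ℕ) (G : Finset (Om n u v))
    (hG : ∀ ω ∈ G, H ≤ (Bset n u v W κ p w s q m A ω.1 ω.2 k i).ncard) :
    (G.card : ℝ) ≤ Fintype.card (Om n u v) *
      ((v : ℝ) ^ 2 * θ + 2 ^ s * w * (((v : ℝ) ^ (p + 2) * q * θ) ^ H * Real.exp 1 ^ 3)) := by
  classical
  have hv0 : 0 < v := by omega
  have hθ0 : 0 < θ := by rw [hθ]; positivity
  let DD : Bits s × Fin w × (Fin H → Fin p → Fin v) → Dat n u v := fun x =>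
    mkD W κ p q H hn hκ hv0 x.2.1 (by have := x.2.1.2; omega) (A.qf k i x.1) x.2.2
  have hsub : G ⊆ Coll n u v ∪ (Finset.univ.biUnion (fun x => Tset (DD x))) := by
    intro ω hω
    by_cases hinj : Function.Injective ω.2
    · apply Finset.mem_union_right
      have hc := hG ω hω
      set B := Bset n u v W κ p w s q m A ω.1 ω.2 k i with hB
      have hemb : Nonempty (Fin H ↪ B) := by
        apply Function.Embedding.nonempty_of_card_le
        rw [Fintype.card_fin, ← Nat.card_eq_fintype_card]
        exact hc
      obtain ⟨φ⟩ := hemb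
      have hmem : ∀ l : Fin H, ∃ g : ℕ → Fin v, ∃ b, 1 ≤ b ∧ b ≤ p ∧ g b = (φ l : Fin v) ∧ ∃ t < q,
          advQ n (modRO n u v W κ p ω.1 ω.2 (jkIdx n u v W κ w s q m A ω.1 ω.2 k - 1) g)
            (A.qf k i (mstate A ω.1 ω.2 k i)) t =
          branchE n u v W κ ω.1 ω.2 (jkIdx n u v W κ w s q m A ω.1 ω.2 k - 1) g b :=
        fun l => (φ l).2
      choose g hg using hmem
      set x : Bits s × Fin w × (Fin H → Fin p → Fin v) :=
        (mstate A ω.1 ω.2 k i, ⟨_, jk_le hw A ω.1 ω.2 k⟩, fun l c => g l (c + 1)) with hx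
      rw [Finset.mem_biUnion]
      refine ⟨x, Finset.mem_univ _, ?_⟩
      rw [Tset, Finset.mem_filter]
      refine ⟨Finset.mem_univ _, hinj, ?_⟩
      have hgg : ∀ l : Fin H, ∀ d, 1 ≤ d → d ≤ p → g l d = (DD x).g l d := by
        intro l d h1 h2
        have e : d - 1 + 1 = d := by omega
        show g l d = gext hv0 (fun l c => g l (c + 1)) l d
        simp [gext, h1, h2, e]
      apply many_facts (DD x) ω hinj (fun l => (φ l : Fin v))
      · intro l l' e; exact φ.injective (Subtype.ext e)
      · intro l
        obtain ⟨b, hb1, hbp, hgb, t, ht, e⟩ := hg l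
        refine ⟨b, hb1, hbp, ?_, t, ht, ?_⟩
        · rw [← hgg l b hb1 hbp]; exact hgb
        · show advQ n (modRO n u v W κ p ω.1 ω.2 (jkIdx n u v W κ w s q m A ω.1 ω.2 k - 1) ((DD x).g l))
            (A.qf k i (mstate A ω.1 ω.2 k i)) t =
            branchE n u v W κ ω.1 ω.2 (jkIdx n u v W κ w s q m A ω.1 ω.2 k - 1) ((DD x).g l) b
          rw [← modRO_congr (hgg l), ← branchE_congr b (fun d h1 h2 => hgg l d h1 (by omega))]
          exact e
    · apply Finset.mem_union_left
      simp [Coll, hinj]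
  have hT : ∀ x, ((Tset (DD x)).card : ℝ) ≤
      Fintype.card (Om n u v) * (((v : ℝ) ^ 2 * q * θ) ^ H * Real.exp 1 ^ 3) := fun x =>
    card_Tset (DD x) hH hHv hq hv θ hθ hR
  have hcard : (Fintype.card (Bits s × Fin w × (Fin H → Fin p → Fin v)) : ℝ) =
      2 ^ s * w * ((v : ℝ) ^ p) ^ H := by
    simp [mul_assoc]
  calc (G.card : ℝ) ≤ ((Coll n u v ∪ (Finset.univ.biUnion (fun x => Tset (DD x)))).card : ℝ) := by
        exact_mod_cast Finset.card_le_card hsub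
    _ ≤ ((Coll n u v).card : ℝ) + ((Finset.univ.biUnion (fun x => Tset (DD x))).card : ℝ) := by
        exact_mod_cast Finset.card_union_le _ _
    _ ≤ ((Coll n u v).card : ℝ) + ∑ x, ((Tset (DD x)).card : ℝ) := by
        gcongr
        exact_mod_cast Finset.card_biUnion_le
    _ ≤ Fintype.card (Om n u v) * ((v : ℝ) ^ 2 * θ) +
        ∑ x : Bits s × Fin w × (Fin H → Fin p → Fin v),
          Fintype.card (Om n u v) * (((v : ℝ) ^ 2 * q * θ) ^ H * Real.exp 1 ^ 3) := by
        apply add_le_add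
        · rw [hθ]; exact card_Coll
        · exact Finset.sum_le_sum (fun x _ => hT x)
    _ = _ := by
        rw [Finset.sum_const, Finset.card_univ, nsmul_eq_mul, hcard]
        have : (v : ℝ) ^ (p + 2) * q * θ = (v : ℝ) ^ p * ((v : ℝ) ^ 2 * q * θ) := by ring
        rw [this, mul_pow ((v : ℝ) ^ p)]
        ring

end union

theorem enc_exists {Ω : Type} [Fintype Ω] (F : Set Ω) (L : ℝ) (hF : (F.ncard : ℝ) ≤ (2 : ℝ) ^ (L - 1)) :
    ∃ Enc : Ω → List Bool, Set.InjOn Enc F ∧ ∀ ω ∈ F, ((Enc ω).length : ℝ) ≤ L := by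
  classical
  rcases F.eq_empty_or_nonempty with h0 | h0
  · exact ⟨fun _ => [], by simp [h0], by simp [h0]⟩
  · have h1 : 1 ≤ F.ncard := (Set.ncard_pos (Set.toFinite F)).2 h0
    have hL : 0 ≤ L - 1 := by
      by_contra hneg
      have : (2 : ℝ) ^ (L - 1) < 1 := Real.rpow_lt_one_of_one_lt_of_neg (by norm_num) (by linarith)
      have h2 : (1 : ℝ) ≤ F.ncard := by exact_mod_cast h1
      linarith
    have hfl : L - 1 ≤ (⌊L⌋₊ : ℝ) := by linarith [Nat.lt_floor_add_one L]
    have hle : F.ncard ≤ 2 ^ ⌊L⌋₊ := by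
      have : (F.ncard : ℝ) ≤ (2 : ℝ) ^ (⌊L⌋₊ : ℝ) :=
        hF.trans (Real.rpow_le_rpow_of_exponent_le (by norm_num) hfl)
      rw [Real.rpow_natCast] at this
      exact_mod_cast this
    have hemb : Nonempty (F ↪ Bits ⌊L⌋₊) := by
      apply Function.Embedding.nonempty_of_card_le
      have hcF : Fintype.card F = F.ncard := by rw [← Nat.card_eq_fintype_card]; rfl
      rw [hcF]
      simpa using hle
    obtain ⟨φ⟩ := hemb
    refine ⟨fun ω => if h : ω ∈ F then List.ofFn (φ ⟨ω, h⟩) else [], ?_, ?_⟩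
    · intro a ha b hb e
      simp only [ha, hb, dif_pos] at e
      have := φ.injective (List.ofFn_injective e)
      exact congrArg Subtype.val this
    · intro ω hω
      simp only [hω, dif_pos, List.length_ofFn]
      exact Nat.floor_le (by linarith)

theorem card_Om (n u v : ℕ) : (Fintype.card (Om n u v) : ℝ) = (2 : ℝ) ^ (n * 2 ^ n + u * v) := by
  simp only [Fintype.card_prod, Fintype.card_fun, Fintype.card_bool, Fintype.card_fin]
  push_cast
  rw [← pow_mul, ← pow_mul, ← pow_add]

theorem exp_bound (w : ℕ) (hw : 2 ≤ w) : 2 * (1 + (w : ℝ) * Real.exp 1 ^ 3) ≤ (w : ℝ) ^ 7 := by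
  have h1 : Real.exp 1 ^ 3 ≤ 21 := by
    have : Real.exp 1 ^ 3 ≤ (2.72 : ℝ) ^ 3 :=
      pow_le_pow_left₀ (Real.exp_pos 1).le (by linarith [Real.exp_one_lt_d9]) 3
    norm_num at this ⊢
    linarith
  have hw' : (2 : ℝ) ≤ w := by exact_mod_cast hw
  have h2 : (64 : ℝ) ≤ (w : ℝ) ^ 6 := by
    have := pow_le_pow_left₀ (by norm_num) hw' 6
    norm_num at this ⊢
    exact this
  have h3 : (w : ℝ) ^ 7 = w * w ^ 6 := by ring
  rw [h3]
  nlinarith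

/-- the numerical part -/
theorem numeric {p s q w H : ℕ} {v u : ℕ} (hv : 2 ≤ v) (hw : 2 ≤ w) (hq : 1 ≤ q) (δ h θ R N : ℝ)
    (hδ : 0 < δ) (hN : 0 ≤ N)
    (hθ : θ = ((2 : ℝ) ^ u)⁻¹) (hRdef : R = (v : ℝ) ^ (p + 2) * q * θ) (hRδ : R = (2 : ℝ) ^ (-δ))
    (hh : h * δ = s + δ) (hH : h ≤ H) :
    N * ((v : ℝ) ^ 2 * θ + 2 ^ s * w * (R ^ H * Real.exp 1 ^ 3)) ≤ N * R * (w : ℝ) ^ 7 / 2 := by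
  have hv1 : (1 : ℝ) ≤ v := by exact_mod_cast (by omega : 1 ≤ v)
  have hq1 : (1 : ℝ) ≤ q := by exact_mod_cast hq
  have hθ0 : 0 < θ := by rw [hθ]; positivity
  have hR0 : 0 < R := by rw [hRδ]; positivity
  have hR1 : R ≤ 1 := by
    rw [hRδ]; exact Real.rpow_le_one_of_one_le_of_nonpos (by norm_num) (by linarith)
  have a1 : (v : ℝ) ^ 2 * θ ≤ R := by
    rw [hRdef, pow_add]
    apply mul_le_mul_of_nonneg_right _ hθ0.le
    have hvp : (1 : ℝ) ≤ (v : ℝ) ^ p := one_le_pow₀ hv1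
    calc (v : ℝ) ^ 2 ≤ (v : ℝ) ^ p * v ^ 2 := le_mul_of_one_le_left (by positivity) hvp
      _ ≤ _ := le_mul_of_one_le_right (by positivity) hq1
  have a2 : (2 : ℝ) ^ s * R ^ H ≤ R := by
    have b1 : R ^ H ≤ R ^ h := by
      rw [← Real.rpow_natCast]
      exact Real.rpow_le_rpow_of_exponent_ge hR0 hR1 hH
    have b2 : R ^ h = (2 : ℝ) ^ (-((s : ℝ) + δ)) := by
      rw [hRδ, ← Real.rpow_mul (by norm_num)]
      congr 1
      linarith
    calc (2 : ℝ) ^ s * R ^ H ≤ (2 : ℝ) ^ s * R ^ h := by gcongr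
      _ = (2 : ℝ) ^ ((s : ℝ) + -((s : ℝ) + δ)) := by
        rw [b2, Real.rpow_add (by norm_num), Real.rpow_natCast]
      _ = R := by rw [hRδ]; congr 1; ring
  have a3 := exp_bound w hw
  have e3 : 0 < Real.exp 1 ^ 3 := by positivity
  have key : (v : ℝ) ^ 2 * θ + 2 ^ s * w * (R ^ H * Real.exp 1 ^ 3) ≤ R * (w : ℝ) ^ 7 / 2 := by
    have : 2 ^ s * w * (R ^ H * Real.exp 1 ^ 3) ≤ R * (w * Real.exp 1 ^ 3) := by
      have := mul_le_mul_of_nonneg_right a2 (by positivity : 0 ≤ (w : ℝ) * Real.exp 1 ^ 3)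
      calc _ = (2 : ℝ) ^ s * R ^ H * (w * Real.exp 1 ^ 3) := by ring
        _ ≤ _ := this
    have := mul_le_mul_of_nonneg_left a3 hR0.le
    nlinarith
  calc _ ≤ N * (R * (w : ℝ) ^ 7 / 2) := mul_le_mul_of_nonneg_left key hN
    _ = _ := by ring

end L15

/-- **Encoding claim inside the proof of Lemma 3.5 (up to an absolute constant `K`).**
In the Line setting with `u > (p+2)·log₂ v + log₂ q` and
`h := s/(u − (p+2)·log₂ v − log₂ q) + 1`: fix a deterministic MPC algorithm, a machine
`i` and a round `k`.  If the probability over uniformly random `(RO, X)` that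
`|B_i^{(k)}| > h` while `E^{(k)}` does not occur equals `ε`, then there is a set `F` of
pairs `(RO, X)` with `|F| ≥ ε·2^(n·2^n + u·v)` and an injective encoding of `F` into
binary strings of length at most
`n·2^n + s + h·((p+2)·log₂ v + log₂ q) + (v − h)·u + K·log₂ w`. -/
theorem stmt15 : ∃ K : ℝ, 0 < K ∧
    ∀ (n u v w κ p W s q m : ℕ),
    1 ≤ u → 2 ≤ w → 1 ≤ κ → v = 2 ^ κ →
    p = ⌈(Real.logb 2 w) ^ 2⌉₊ → W = Nat.clog 2 (w + p + 2) →
    W + 2 * u ≤ n → κ + u ≤ n → 1 ≤ q → 1 ≤ m →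
    ((p : ℝ) + 2) * Real.logb 2 v + Real.logb 2 q < (u : ℝ) →
    ∀ h : ℝ, h = (s : ℝ) / ((u : ℝ) - ((p : ℝ) + 2) * Real.logb 2 v - Real.logb 2 q) + 1 →
    ∀ (A : MPC n s q m (Fin v → Bits u)) (i : Fin m) (k : ℕ) (ε : ℝ),
    unifProb (fun ω : (Bits n → Bits n) × (Fin v → Bits u) =>
      h < ((Bset n u v W κ p w s q m A ω.1 ω.2 k i).ncard : ℝ) ∧
      ¬ (∃ k2 ≤ k, ∃ i2 : Fin m, ∃ t2 < q, ∃ j, 1 ≤ j ∧ j ≤ w ∧ ∃ b ≤ p, ∃ a : ℕ → Fin v,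
        mquery A ω.1 ω.2 k2 i2 t2 = branchE n u v W κ ω.1 ω.2 j a b ∧
        ∀ (k1 : ℕ) (i1 : Fin m) (t1 : ℕ), k1 ≤ k → t1 < q →
          (k1 < k2 ∨ (k1 = k2 ∧ i1 = i2 ∧ t1 < t2)) →
          mquery A ω.1 ω.2 k1 i1 t1 ≠
            (if b = 0 then lineE n u v W κ ω.1 ω.2 (j - 1)
             else branchE n u v W κ ω.1 ω.2 j a (b - 1)))) = ε →
    ∃ (F : Set ((Bits n → Bits n) × (Fin v → Bits u)))
      (Enc : (Bits n → Bits n) × (Fin v → Bits u) → List Bool),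
      ε * (2 : ℝ) ^ (n * 2 ^ n + u * v) ≤ (F.ncard : ℝ) ∧
      Set.InjOn Enc F ∧
      ∀ ω ∈ F, ((Enc ω).length : ℝ) ≤
        (n : ℝ) * 2 ^ n + (s : ℝ) +
          h * (((p : ℝ) + 2) * Real.logb 2 v + Real.logb 2 q) +
          ((v : ℝ) - h) * u + K * Real.logb 2 w := by
  classical
  refine ⟨7, by norm_num, ?_⟩
  intro n u v w κ p W s q m hu hw hκ1 hvκ hp hWd hn hκ hq hm hc h hh A i k ε hε
  have hv2 : 2 ≤ v := by
    rw [hvκ]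
    calc 2 = 2 ^ 1 := by norm_num
      _ ≤ 2 ^ κ := Nat.pow_le_pow_right (by norm_num) hκ1
  have hW : w + p + 2 ≤ 2 ^ W := by
    rw [hWd]; exact Nat.le_pow_clog (by norm_num) _
  set δ : ℝ := (u : ℝ) - (((p : ℝ) + 2) * Real.logb 2 v + Real.logb 2 q) with hδdef
  have hδ : 0 < δ := by rw [hδdef]; linarith
  have hden : (u : ℝ) - ((p : ℝ) + 2) * Real.logb 2 v - Real.logb 2 q = δ := by rw [hδdef]; ring
  rw [hden] at hh
  have hhδ : h * δ = s + δ := by rw [hh]; field_simp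
  have h1h : 1 ≤ h := by rw [hh]; have : 0 ≤ (s : ℝ) / δ := by positivity
                         linarith
  set θ : ℝ := ((2 : ℝ) ^ u)⁻¹ with hθ
  have hvpos : (0 : ℝ) < v := by exact_mod_cast (by omega : 0 < v)
  have hqpos : (0 : ℝ) < q := by exact_mod_cast (by omega : 0 < q)
  have hwpos : (0 : ℝ) < w := by exact_mod_cast (by omega : 0 < w)
  have hRδ : (v : ℝ) ^ (p + 2) * q * θ = (2 : ℝ) ^ (-δ) := by
    have e1 : (v : ℝ) ^ (p + 2) = (2 : ℝ) ^ (((p : ℝ) + 2) * Real.logb 2 v) := by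
      rw [mul_comm, Real.rpow_mul (by norm_num), Real.rpow_logb (by norm_num) (by norm_num) hvpos,
        ← Real.rpow_natCast]
      push_cast
      rfl
    have e2 : (q : ℝ) = (2 : ℝ) ^ (Real.logb 2 q) :=
      (Real.rpow_logb (by norm_num) (by norm_num) hqpos).symm
    have e3 : θ = (2 : ℝ) ^ (-(u : ℝ)) := by
      rw [hθ, Real.rpow_neg (by norm_num), Real.rpow_natCast]
    rw [e1, e3]
    nth_rewrite 1 [e2]
    rw [← Real.rpow_add (by norm_num), ← Real.rpow_add (by norm_num)]
    congr 1
    rw [hδdef]; ring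
  have hR1 : (v : ℝ) ^ (p + 2) * q * θ ≤ 1 := by
    rw [hRδ]; exact Real.rpow_le_one_of_one_le_of_nonpos (by norm_num) (by linarith)
  unfold unifProb at hε
  generalize hP : (fun ω : (Bits n → Bits n) × (Fin v → Bits u) =>
      h < ((Bset n u v W κ p w s q m A ω.1 ω.2 k i).ncard : ℝ) ∧
      ¬ (∃ k2 ≤ k, ∃ i2 : Fin m, ∃ t2 < q, ∃ j, 1 ≤ j ∧ j ≤ w ∧ ∃ b ≤ p, ∃ a : ℕ → Fin v,
        mquery A ω.1 ω.2 k2 i2 t2 = branchE n u v W κ ω.1 ω.2 j a b ∧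
        ∀ (k1 : ℕ) (i1 : Fin m) (t1 : ℕ), k1 ≤ k → t1 < q →
          (k1 < k2 ∨ (k1 = k2 ∧ i1 = i2 ∧ t1 < t2)) →
          mquery A ω.1 ω.2 k1 i1 t1 ≠
            (if b = 0 then lineE n u v W κ ω.1 ω.2 (j - 1)
             else branchE n u v W κ ω.1 ω.2 j a (b - 1)))) = Pr at hε
  have hPB : ∀ ω, Pr ω → h < ((Bset n u v W κ p w s q m A ω.1 ω.2 k i).ncard : ℝ) := by
    intro ω hω
    rw [← hP] at hω
    exact hω.1
  clear hP
  have hcard := L15.card_Om n u v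
  set F : Set ((Bits n → Bits n) × (Fin v → Bits u)) := {ω | Pr ω} with hFdef
  have hcard' : (Fintype.card ((Bits n → Bits n) × (Fin v → Bits u)) : ℝ) =
      (2 : ℝ) ^ (n * 2 ^ n + u * v) := hcard
  have hFle : ε * (2 : ℝ) ^ (n * 2 ^ n + u * v) ≤ (F.ncard : ℝ) := by
    rw [← hε, hcard', div_mul_cancel₀ _ (by positivity)]
  set L : ℝ := (n : ℝ) * 2 ^ n + (s : ℝ) +
          h * (((p : ℝ) + 2) * Real.logb 2 v + Real.logb 2 q) +
          ((v : ℝ) - h) * u + 7 * Real.logb 2 w with hLdef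
  have hL : L = ((n * 2 ^ n + u * v : ℕ) : ℝ) - δ + 7 * Real.logb 2 w := by
    have : (((p : ℝ) + 2) * Real.logb 2 v + Real.logb 2 q) = u - δ := by rw [hδdef]; ring
    rw [hLdef, this]
    push_cast
    linear_combination -hhδ
  have hpow : (2 : ℝ) ^ (L - 1) = (2 : ℝ) ^ (n * 2 ^ n + u * v) * (2 : ℝ) ^ (-δ) * (w : ℝ) ^ 7 / 2 := by
    have e : L - 1 = ((n * 2 ^ n + u * v : ℕ) : ℝ) + -δ + Real.logb 2 w * (7 : ℕ) - 1 := by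
      rw [hL]; push_cast; ring
    rw [e, Real.rpow_sub (by norm_num), Real.rpow_add (by norm_num), Real.rpow_add (by norm_num),
      Real.rpow_natCast, Real.rpow_one, Real.rpow_mul (by norm_num),
      Real.rpow_logb (by norm_num) (by norm_num) hwpos, Real.rpow_natCast]
  have hbound : (F.ncard : ℝ) ≤ (2 : ℝ) ^ (L - 1) := by
    rcases F.eq_empty_or_nonempty with h0 | ⟨ω0, hω0⟩
    · rw [h0]; simp; positivity
    · have hall : ∀ ω ∈ F, ⌈h⌉₊ ≤ (Bset n u v W κ p w s q m A ω.1 ω.2 k i).ncard := by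
        intro ω hω
        exact Nat.ceil_le.2 (hPB ω hω).le
      have hHv : ⌈h⌉₊ ≤ v := by
        refine (hall ω0 hω0).trans ?_
        have := Set.ncard_le_card (Bset n u v W κ p w s q m A ω0.1 ω0.2 k i)
        simpa using this
      have hH1 : 1 ≤ ⌈h⌉₊ := Nat.one_le_ceil_iff.2 (by linarith)
      have hb := L15.event_bound hn hκ hv2 (by omega) hq hH1 hHv hW θ hθ hR1 A i k F.toFinset
        (fun ω hω => hall ω (Set.mem_toFinset.1 hω))
      have hnum := L15.numeric (H := ⌈h⌉₊) (p := p) (s := s) hv2 hw hq δ h θ _ _ hδ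
        (by positivity : (0 : ℝ) ≤ (2 : ℝ) ^ (n * 2 ^ n + u * v)) hθ rfl hRδ hhδ (Nat.le_ceil h)
      rw [hcard] at hb
      rw [Set.ncard_eq_toFinset_card', hpow, ← hRδ]
      exact hb.trans hnum
  obtain ⟨Enc, hE1, hE2⟩ := L15.enc_exists F L hbound
  exact ⟨F, Enc, hFle, hE1, hE2⟩
end
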